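/- arXiv:2409.00380 — 2 statements merged into one kernel-verified Lean document; each statement's English description precedes it below -/
import Mathlib

section
/- Let ζ = e^{πi/6}, ω = e^{2πi/3}, let G_35 = E_6 ⊂ GL_6(C) be generated by the six order-2 reflections s(α_1), ..., s(α_6) with simple roots α_1 = e_2 − e_3 + (1/√2)e_5 + √(3/2)e_6, α_2 = e_3 − e_4 − √2 e_5, α_3 = 2e_4, α_4 = e_3 − e_4 + √2 e_5, α_5 = e_2 − e_3 − (1/√2)e_5 − √(3/2)e_6, α_6 = e_1 − e_2 − e_3 − e_4, and let g = s(α_1)⋯s(α_6) be the Coxeter element. Let E be the ζ^4-eigenspace of g^4, a 3-dimensional subspace, N_E = {s ∈ G_35 : s(E) ⊆ E}, and π_E restriction to E. Then there exists a C-linear isomorphism ψ : E → C^3 such that ψ ∘ π_E(N_E) ∘ ψ^{−1} = G_25, where G_25 ⊂ GL_3(C) is generated by the three order-3 reflections s(β, ω) with roots β = (0,0,1)^T, (ω, ω^2, 1)^T, (1,0,0)^T. In other words, the 3-reflection subquotient of G_35 = E_6 is isomorphic to G_25. -/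
open Matrix MvPolynomial

namespace Paper

noncomputable section

/-- The standard Hermitian inner product `(v, w) = Σ v_i conj(w_i)` on `ℂ^N`. -/
def herm {N : ℕ} (v w : Fin N → ℂ) : ℂ := ∑ i, v i * (starRingEnd ℂ) (w i)

/-- The reflection `s(v, λ) : w ↦ w - (1 - λ) ((w,v)/(v,v)) v` with root `v` and
nontrivial eigenvalue `λ`, as a matrix. -/
def reflMat {N : ℕ} (v : Fin N → ℂ) (lam : ℂ) : Matrix (Fin N) (Fin N) ℂ :=
  Matrix.of fun i j =>
    (if i = j then (1 : ℂ) else 0) - (1 - lam) * v i * (starRingEnd ℂ) (v j) / herm v v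

/-- The monomial matrix `ι(θ, σ)` with `e_i ↦ θ_{σ(i)} e_{σ(i)}`. -/
def monomialMatrix {N : ℕ} (θ : Fin N → ℂ) (σ : Equiv.Perm (Fin N)) :
    Matrix (Fin N) (Fin N) ℂ :=
  Matrix.of fun j i => if j = σ i then θ (σ i) else 0

/-- The imprimitive reflection group `G(m, p, N)`: all monomial `N × N` matrices whose
nonzero entries are `m`-th roots of unity and whose product of nonzero entries is an
`(m/p)`-th root of unity. -/
def Gimp (m p N : ℕ) : Set (Matrix (Fin N) (Fin N) ℂ) :=
  {M | ∃ (θ : Fin N → ℂ) (σ : Equiv.Perm (Fin N)),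
    (∀ i, θ i ^ m = 1) ∧ (∏ i, θ i) ^ (m / p) = 1 ∧ M = monomialMatrix θ σ}

/-- The `μ`-eigenspace of (the linear map of) a matrix. -/
def eigSpace {n : ℕ} (M : Matrix (Fin n) (Fin n) ℂ) (μ : ℂ) : Submodule ℂ (Fin n → ℂ) :=
  Module.End.eigenspace M.mulVecLin μ

/-!
Over `ℤ[ω]`, with `θ = 1 - ω`, the root lattice of `E₆` is the lattice `L` of vectors in `ℤ[ω]³`
whose coordinates are congruent modulo `θ`, in such a way that `ω` acts as the fourth power of the
Coxeter element; the embedding of `L` in `ℂ³` is then the projection of `ℂ⁶` onto `E`. An element of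
`N_E` commutes with `ω` and, like every product of reflections in roots, acts trivially on the
quotient of the weight lattice by `L`. So its restriction to `E` lies in the discriminant kernel of
`L`, the group of unitary automorphisms with this property. `G₂₅` is contained in the discriminant
kernel and is transitive on the minimal vectors of `L`, and an element of the kernel which fixes
`θ e₀` is diagonal with cube roots of unity as entries, hence in `G₂₅`: the two groups are equal.
Conversely each generating reflection of `G₂₅` is induced by a word in the simple reflections.
-/

section Eisenstein

/-- The ring of Eisenstein integers `ℤ[ω]`, where `ω ^ 2 = -1 - ω`. -/
abbrev EisensteinInt := QuadraticAlgebra ℤ (-1) (-1)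

namespace EisensteinInt

/-- The standard primitive cube root of unity in `ℤ[ω]`. -/
abbrev omega : EisensteinInt := QuadraticAlgebra.omega

/-- The prime `θ = 1 - ω` of `ℤ[ω]` above `3`. -/
def theta : EisensteinInt := 1 - omega

attribute [local simp] QuadraticAlgebra.re_one QuadraticAlgebra.im_one
  QuadraticAlgebra.re_ofNat QuadraticAlgebra.im_ofNat

variable {z : EisensteinInt}

theorem norm_eq (z : EisensteinInt) : z.norm = z.re * z.re - z.re * z.im + z.im * z.im := by
  rw [QuadraticAlgebra.norm_def]; ring

theorem norm_nonneg (z : EisensteinInt) : 0 ≤ z.norm := by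
  rw [norm_eq]; nlinarith [sq_nonneg (z.re - z.im), sq_nonneg (z.re + z.im)]

theorem norm_eq_zero : z.norm = 0 ↔ z = 0 := by
  refine ⟨fun h ↦ ?_, fun h ↦ by simp [h]⟩
  rw [norm_eq] at h
  ext
  · exact pow_eq_zero_iff two_ne_zero |>.1 <| le_antisymm
      (by nlinarith [sq_nonneg (z.re - 2 * z.im)]) (sq_nonneg z.re)
  · exact pow_eq_zero_iff two_ne_zero |>.1 <| le_antisymm
      (by nlinarith [sq_nonneg (2 * z.re - z.im)]) (sq_nonneg z.im)

theorem theta_dvd_iff : theta ∣ z ↔ 3 ∣ z.re + z.im := by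
  constructor
  · rintro ⟨w, rfl⟩
    exact ⟨w.im, by simp [theta]; ring⟩
  · rintro ⟨n, hn⟩
    exact ⟨⟨z.re - n, n⟩, by ext <;> simp [theta]; linarith⟩

theorem theta_dvd_star (h : theta ∣ z) : theta ∣ star z := by
  rw [theta_dvd_iff] at h ⊢
  simp only [QuadraticAlgebra.re_star, QuadraticAlgebra.im_star]
  omega

theorem three_dvd_add_star (h : theta ∣ z) : 3 ∣ z + star z := by
  obtain ⟨w, rfl⟩ := h
  exact ⟨w.re, by ext <;> simp [theta] <;> ring⟩

theorem norm_theta_mul (z : EisensteinInt) : (theta * z).norm = 3 * z.norm := by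
  simp [theta, norm_eq]; ring

theorem exists_theta_dvd_sub_unit (h : ¬theta ∣ z) :
    ∃ ε : ℤˣ, theta ∣ z - ((ε : ℤ) : EisensteinInt) := by
  simp only [theta_dvd_iff] at h ⊢
  rcases (by omega : 3 ∣ z.re + z.im - 1 ∨ 3 ∣ z.re + z.im + 1) with h | h
  · exact ⟨1, by simpa [sub_add_eq_add_sub] using h⟩
  · exact ⟨-1, by simpa [add_right_comm] using h⟩

theorem eq_omega_pow_of_norm_eq_one (hz : z.norm = 1) (h : theta ∣ z - 1) :
    ∃ k : ℕ, z = omega ^ k := by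
  obtain ⟨x, y⟩ := z
  simp only [norm_eq, theta_dvd_iff, QuadraticAlgebra.re_sub, QuadraticAlgebra.im_sub,
    QuadraticAlgebra.re_one, QuadraticAlgebra.im_one] at hz h
  have hx : x ^ 2 < 2 ^ 2 := by nlinarith [sq_nonneg (x - 2 * y)]
  have hy : y ^ 2 < 2 ^ 2 := by nlinarith [sq_nonneg (2 * x - y)]
  obtain ⟨hx₁, hx₂⟩ := abs_lt.1 (abs_lt_of_sq_lt_sq hx two_pos.le)
  obtain ⟨hy₁, hy₂⟩ := abs_lt.1 (abs_lt_of_sq_lt_sq hy two_pos.le)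
  interval_cases x <;> interval_cases y <;> first | omega | skip
  · exact ⟨2, by decide⟩
  · exact ⟨1, by decide⟩
  · exact ⟨0, by decide⟩

theorem eq_unit_mul_omega_pow_of_norm_eq_one {ε : ℤˣ} (hz : z.norm = 1)
    (h : theta ∣ z - ((ε : ℤ) : EisensteinInt)) :
    ∃ k : ℕ, z = ((ε : ℤ) : EisensteinInt) * omega ^ k := by
  rcases Int.units_eq_one_or ε with rfl | rfl
  · simpa using eq_omega_pow_of_norm_eq_one hz (by simpa using h)
  · obtain ⟨k, hk⟩ := eq_omega_pow_of_norm_eq_one (z := -z) (by simpa using hz)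
      (by rw [← dvd_neg]; simpa [add_comm] using h)
    exact ⟨k, by simp [← hk]⟩

theorem exists_eq_single_of_sum_norm_eq_one {ι : Type*} [Fintype ι] [DecidableEq ι]
    {x : ι → EisensteinInt} (h : ∑ i, (x i).norm = 1) :
    ∃ j u, u.norm = 1 ∧ x = Pi.single j u := by
  obtain ⟨j, -, hj⟩ := Finset.exists_ne_zero_of_sum_ne_zero (h.trans_ne one_ne_zero)
  have hsplit := Finset.add_sum_erase Finset.univ (fun i ↦ (x i).norm) (Finset.mem_univ j)
  have hrest : 0 ≤ ∑ i ∈ Finset.univ.erase j, (x i).norm :=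
    Finset.sum_nonneg fun i _ ↦ norm_nonneg _
  have hj₀ := norm_nonneg (x j)
  have hzero := (Finset.sum_eq_zero_iff_of_nonneg fun i _ ↦ norm_nonneg _).1
    (by omega : ∑ i ∈ Finset.univ.erase j, (x i).norm = 0)
  refine ⟨j, x j, by omega, funext fun i ↦ ?_⟩
  rcases eq_or_ne i j with rfl | hij
  · rw [Pi.single_eq_same]
  · rw [Pi.single_eq_of_ne hij, norm_eq_zero.1 (hzero i (by simp [hij]))]

variable (φ : EisensteinInt →+* ℂ)

theorem exists_ringHom_omega_eq {ω : ℂ} (hω : IsPrimitiveRoot ω 3) :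
    ∃ φ : EisensteinInt →+* ℂ, φ omega = ω := by
  have h : ω * ω = (-1 : ℤ) • 1 + (-1 : ℤ) • ω := by
    have := hω.geom_sum_eq_zero (by norm_num)
    simp only [Finset.sum_range_succ, Finset.sum_range_zero] at this
    simp only [neg_smul, one_smul]
    linear_combination this
  exact ⟨(QuadraticAlgebra.lift ⟨ω, h⟩ : _ →ₐ[ℤ] ℂ), by simp⟩

theorem map_star (z : EisensteinInt) : φ (star z) = star (φ z) := by
  have homega : φ (star omega) = star (φ omega) := by
    have h3 : φ omega ^ 3 = 1 := by rw [← map_pow, ← map_one φ]; congr 1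
    have h : φ (star omega) * φ omega = 1 := by rw [← map_mul, ← map_one φ]; congr 1
    have hn : ‖φ omega‖ = 1 := Complex.norm_eq_one_of_pow_eq_one h3 three_ne_zero
    rw [eq_inv_of_mul_eq_one_left h, Complex.inv_eq_conj hn, starRingEnd_apply]
  have hz : z = z.re + z.im * omega := by ext <;> simp
  rw [hz]
  simp [homega]

theorem map_norm (z : EisensteinInt) : (z.norm : ℂ) = φ z * star (φ z) := by
  rw [← map_star, ← map_mul, ← QuadraticAlgebra.algebraMap_norm_eq_mul_star]
  simp

theorem map_injective : Function.Injective φ := by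
  refine (injective_iff_map_eq_zero φ).2 fun z hz ↦ norm_eq_zero.1 ?_
  have hnorm : (z.norm : ℂ) = 0 := by rw [map_norm, hz, zero_mul]
  exact_mod_cast hnorm

end EisensteinInt

end Eisenstein

section Reflections

variable {N : ℕ} (v w : Fin N → ℂ) (lam mu : ℂ)

theorem herm_eq_dotProduct : herm v w = v ⬝ᵥ star w := rfl

open scoped ComplexOrder in
theorem herm_self_eq_zero : herm v v = 0 ↔ v = 0 := dotProduct_self_star_eq_zero

theorem reflMat_eq_one_sub :
    reflMat v lam = 1 - ((1 - lam) / herm v v) • vecMulVec v (star v) := by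
  ext i j
  simp only [reflMat, of_apply, Matrix.sub_apply, one_apply, Matrix.smul_apply, vecMulVec_apply,
    Pi.star_apply, smul_eq_mul, starRingEnd_apply]
  ring

theorem reflMat_mulVec :
    reflMat v lam *ᵥ w = w - ((1 - lam) / herm v v * herm w v) • v := by
  rw [reflMat_eq_one_sub, sub_mulVec, one_mulVec, smul_mulVec, vecMulVec_mulVec,
    herm_eq_dotProduct w, dotProduct_comm w, op_smul_eq_smul, smul_smul]

theorem reflMat_one : reflMat v 1 = 1 := by
  rw [reflMat_eq_one_sub, sub_self, zero_div, zero_smul, sub_zero]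

theorem conjTranspose_reflMat : (reflMat v lam)ᴴ = reflMat v (star lam) := by
  have hreal : star (herm v v) = herm v v := by
    rw [herm_eq_dotProduct, ← star_dotProduct_star, star_star]
  rw [reflMat_eq_one_sub, reflMat_eq_one_sub, conjTranspose_sub, conjTranspose_one,
    conjTranspose_smul, conjTranspose_vecMulVec, star_star, star_div₀, hreal, star_sub, star_one]

theorem reflMat_mul_reflMat : reflMat v lam * reflMat v mu = reflMat v (lam * mu) := by
  rcases eq_or_ne v 0 with rfl | hv
  · simp [reflMat_eq_one_sub]
  have hh : herm v v ≠ 0 := (herm_self_eq_zero v).not.2 hv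
  have hsq : vecMulVec v (star v) * vecMulVec v (star v) = herm v v • vecMulVec v (star v) := by
    rw [vecMulVec_mul_vecMulVec, vecMulVec_smul, dotProduct_comm, herm_eq_dotProduct]
  simp only [reflMat_eq_one_sub, sub_mul, mul_sub, one_mul, mul_one, smul_mul_smul_comm, hsq,
    smul_smul]
  match_scalars
  · ring
  · field_simp
    ring

theorem reflMat_pow (n : ℕ) : reflMat v lam ^ n = reflMat v (lam ^ n) := by
  induction n with
  | zero => rw [pow_zero, pow_zero, reflMat_one]
  | succ n ih => rw [pow_succ, ih, reflMat_mul_reflMat, pow_succ]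

variable {v lam}

theorem reflMat_smul {c : ℂ} (hc : c ≠ 0) : reflMat (c • v) lam = reflMat v lam := by
  have hc' : star c ≠ 0 := star_ne_zero.2 hc
  simp only [reflMat_eq_one_sub, herm_eq_dotProduct, star_smul, smul_dotProduct, dotProduct_smul,
    smul_vecMulVec, vecMulVec_smul, smul_smul, smul_eq_mul]
  congr 2
  field_simp

theorem herm_mulVec_mulVec {U : Matrix (Fin N) (Fin N) ℂ} (hU : U ∈ unitaryGroup (Fin N) ℂ) :
    herm (U *ᵥ v) (U *ᵥ v) = herm v v := by
  rw [herm_eq_dotProduct, star_mulVec, dotProduct_comm, ← dotProduct_mulVec, mulVec_mulVec,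
    ← star_eq_conjTranspose, mem_unitaryGroup_iff'.1 hU, one_mulVec, dotProduct_comm,
    herm_eq_dotProduct]

theorem reflMat_mulVec_root {U : Matrix (Fin N) (Fin N) ℂ} (hU : U ∈ unitaryGroup (Fin N) ℂ) :
    reflMat (U *ᵥ v) lam = U * reflMat v lam * Uᴴ := by
  rw [reflMat_eq_one_sub, reflMat_eq_one_sub, herm_mulVec_mulVec hU, mul_sub, sub_mul, mul_one,
    ← star_eq_conjTranspose U, mem_unitaryGroup_iff.1 hU, Matrix.mul_smul, Matrix.smul_mul,
    mul_vecMulVec, vecMulVec_mul, star_mulVec, star_eq_conjTranspose]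

theorem reflMat_mem_unitaryGroup (hlam : lam * star lam = 1) :
    reflMat v lam ∈ unitaryGroup (Fin N) ℂ := by
  rw [mem_unitaryGroup_iff, star_eq_conjTranspose, conjTranspose_reflMat, reflMat_mul_reflMat, hlam,
    reflMat_one]

theorem reflMat_single (i : Fin N) :
    reflMat (Pi.single i 1) lam = diagonal (Function.update 1 i lam) := by
  ext j k
  simp only [reflMat_eq_one_sub, herm_eq_dotProduct, Matrix.sub_apply, Matrix.smul_apply,
    vecMulVec_apply, single_one_dotProduct, Pi.star_apply, Pi.single_eq_same, diagonal_apply,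
    one_apply]
  rcases eq_or_ne j i with rfl | hj <;> rcases eq_or_ne j k with rfl | hk <;>
    simp_all [Pi.single_apply]

variable {ι : Type*} (a : ι → Fin N → ℂ)

/-- The monoid generated by the reflections `s(a i, λ)`. It is the reflection group with these
generators when `λ` is a root of unity. -/
def reflMonoid (lam : ℂ) : Submonoid (Matrix (Fin N) (Fin N) ℂ) :=
  Submonoid.closure {M | ∃ i, M = reflMat (a i) lam}

variable {a}

theorem reflMat_mem_reflMonoid (i : ι) : reflMat (a i) lam ∈ reflMonoid a lam :=
  Submonoid.subset_closure ⟨i, rfl⟩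

theorem prod_reflMat_mem_reflMonoid (l : List ι) :
    (l.map fun i ↦ reflMat (a i) lam).prod ∈ reflMonoid a lam := by
  refine list_prod_mem fun M hM ↦ ?_
  obtain ⟨i, -, rfl⟩ := List.mem_map.1 hM
  exact reflMat_mem_reflMonoid i

variable {n : ℕ}

theorem star_eq_pow_pred_of_pow_eq_one (hn : n ≠ 0) (hlam : lam ^ n = 1) :
    star lam = lam ^ (n - 1) := by
  rw [← starRingEnd_apply, ← Complex.inv_eq_conj (Complex.norm_eq_one_of_pow_eq_one hlam hn)]
  exact inv_eq_of_mul_eq_one_right (by rw [mul_pow_sub_one hn, hlam])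

theorem conjTranspose_mem_reflMonoid (hn : n ≠ 0) (hlam : lam ^ n = 1)
    {M : Matrix (Fin N) (Fin N) ℂ} (hM : M ∈ reflMonoid a lam) : Mᴴ ∈ reflMonoid a lam := by
  induction hM using Submonoid.closure_induction with
  | mem M hM =>
    obtain ⟨i, rfl⟩ := hM
    rw [conjTranspose_reflMat, star_eq_pow_pred_of_pow_eq_one hn hlam, ← reflMat_pow]
    exact pow_mem (reflMat_mem_reflMonoid i) _
  | one => rw [conjTranspose_one]; exact one_mem _
  | mul M M' _ _ ih ih' => rw [conjTranspose_mul]; exact mul_mem ih' ih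

theorem reflMonoid_le_unitaryGroup (hn : n ≠ 0) (hlam : lam ^ n = 1) :
    reflMonoid a lam ≤ unitaryGroup (Fin N) ℂ := by
  refine Submonoid.closure_le.2 ?_
  rintro _ ⟨i, rfl⟩
  refine reflMat_mem_unitaryGroup ?_
  rw [star_eq_pow_pred_of_pow_eq_one hn hlam, mul_pow_sub_one hn, hlam]

end Reflections

section EisensteinLattices

open EisensteinInt

/-- The `E₆` root lattice as a lattice over `ℤ[ω]`: the vectors in `ℤ[ω]³` whose coordinates are
congruent modulo `θ`. -/
def rootLattice : Submodule EisensteinInt (Fin 3 → EisensteinInt) where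
  carrier := {x | ∀ i j, theta ∣ x i - x j}
  add_mem' hx hy i j := by
    simpa only [Pi.add_apply, add_sub_add_comm] using dvd_add (hx i j) (hy i j)
  zero_mem' i j := by simp
  smul_mem' c x hx i j := by
    simpa only [Pi.smul_apply, smul_eq_mul, ← mul_sub] using (hx i j).mul_left c

/-- The `E₆` weight lattice as a lattice over `ℤ[ω]`: the vectors in `ℤ[ω]³` whose coordinate sum is
divisible by `θ`. Up to scaling it is the dual of `rootLattice`. -/
def weightLattice : Submodule EisensteinInt (Fin 3 → EisensteinInt) where
  carrier := {y | theta ∣ ∑ i, y i}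
  add_mem' hx hy := by
    simpa only [Set.mem_ofPred_eq, Pi.add_apply, Finset.sum_add_distrib] using dvd_add hx hy
  zero_mem' := by simp
  smul_mem' c x hx := by
    simpa only [Set.mem_ofPred_eq, Pi.smul_apply, smul_eq_mul, ← Finset.mul_sum] using
      Dvd.dvd.mul_left hx c

variable {x y : Fin 3 → EisensteinInt}

theorem theta_dvd_dotProduct_star (hx : x ∈ rootLattice) (hy : y ∈ weightLattice) :
    theta ∣ y ⬝ᵥ star x := by
  have hsplit : y ⬝ᵥ star x = ∑ i, y i * star (x i - x 0) + (∑ i, y i) * star (x 0) := by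
    simp only [dotProduct, Pi.star_apply, star_sub, mul_sub, Finset.sum_sub_distrib,
      Finset.sum_mul, sub_add_cancel]
  rw [hsplit]
  exact dvd_add (Finset.dvd_sum fun i _ ↦ (theta_dvd_star (hx i 0)).mul_left _)
    (Dvd.dvd.mul_right hy _)

theorem rootLattice_le_weightLattice : rootLattice ≤ weightLattice := by
  intro x hx
  have hsum : ∑ i, x i = (x 0 - x 2) + (x 1 - x 2) + theta * ((1 - star omega) * x 2) := by
    have h3 : theta * (1 - star omega) = 3 := by decide
    rw [← mul_assoc, h3, Fin.sum_univ_three]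
    ring
  exact (dvd_add (dvd_add (hx 0 2) (hx 1 2)) (dvd_mul_right _ _)).trans hsum.symm.dvd

theorem single_theta_mul_mem_rootLattice (j : Fin 3) (z : EisensteinInt) :
    Pi.single j (theta * z) ∈ rootLattice := by
  have h : ∀ i, theta ∣ (Pi.single j (theta * z) : Fin 3 → EisensteinInt) i := fun i ↦ by
    rcases eq_or_ne i j with rfl | hij
    · rw [Pi.single_eq_same]; exact dvd_mul_right _ _
    · rw [Pi.single_eq_of_ne hij]; exact dvd_zero _
  exact fun i k ↦ dvd_sub (h i) (h k)

theorem eq_single_of_theta_dvd_of_sum_norm_eq_three {ι : Type*} [Fintype ι] [DecidableEq ι]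
    {x : ι → EisensteinInt} (hx : ∀ i, theta ∣ x i) (hnorm : ∑ i, (x i).norm = 3) :
    ∃ (ε : ℤˣ) (k : ℕ) (j : ι),
      x = ((ε : ℤ) : EisensteinInt) • Pi.single j (omega ^ k * theta) := by
  choose z hz using hx
  have hz₁ : ∑ i, (z i).norm = 1 := by
    simp only [hz, norm_theta_mul, ← Finset.mul_sum] at hnorm
    omega
  obtain ⟨j, u, hu, hzu⟩ := exists_eq_single_of_sum_norm_eq_one hz₁
  have hu' : ¬theta ∣ u := fun ⟨w, hw⟩ ↦ by rw [hw, norm_theta_mul] at hu; omega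
  obtain ⟨ε, hε⟩ := exists_theta_dvd_sub_unit hu'
  obtain ⟨k, rfl⟩ := eq_unit_mul_omega_pow_of_norm_eq_one hu hε
  refine ⟨ε, k, j, funext fun i ↦ ?_⟩
  rw [hz, hzu]
  rcases eq_or_ne i j with rfl | hij
  · simp only [Pi.single_eq_same, Pi.smul_apply, smul_eq_mul]
    ring
  · simp [hij]

theorem eq_pow_of_not_theta_dvd_of_sum_norm_eq_three (hx : x ∈ rootLattice) (h₀ : ¬theta ∣ x 0)
    (hnorm : ∑ i, (x i).norm = 3) :
    ∃ (ε : ℤˣ) (k : Fin 3 → ℕ), x = ((ε : ℤ) : EisensteinInt) • fun i ↦ omega ^ k i := by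
  obtain ⟨ε, hε⟩ := exists_theta_dvd_sub_unit h₀
  have hdvd : ∀ i, theta ∣ x i - ((ε : ℤ) : EisensteinInt) := fun i ↦ by
    simpa using dvd_add (hx i 0) hε
  have hpos : ∀ i, 1 ≤ (x i).norm := fun i ↦ by
    refine (norm_nonneg _).lt_of_ne fun h ↦ h₀ ?_
    simpa [norm_eq_zero.1 h.symm] using hx 0 i
  have hnorm₁ : ∀ i, (x i).norm = 1 := by
    have hsum : ∑ _i : Fin 3, (1 : ℤ) = ∑ i, (x i).norm := by simp [hnorm]
    exact fun i ↦ ((Finset.sum_eq_sum_iff_of_le fun i _ ↦ hpos i).1 hsum i (Finset.mem_univ i)).symm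
  choose k hk using fun i ↦ eq_unit_mul_omega_pow_of_norm_eq_one (hnorm₁ i) (hdvd i)
  exact ⟨ε, k, funext hk⟩

end EisensteinLattices

section G25

open EisensteinInt

/-- The roots `(0, 0, 1)`, `(ω, ω ^ 2, 1)`, `(1, 0, 0)` of the generating reflections of `G₂₅`. -/
def g25Root {R : Type*} [CommRing R] (ω : R) : Fin 3 → Fin 3 → R :=
  ![![0, 0, 1], ![ω, ω ^ 2, 1], ![1, 0, 0]]

/-- The complex reflection group `G₂₅`, generated by three reflections of order `3`. -/
def g25 (ω : ℂ) : Submonoid (Matrix (Fin 3) (Fin 3) ℂ) := reflMonoid (g25Root ω) ω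

theorem map_g25Root {R S : Type*} [CommRing R] [CommRing S] (f : R →+* S) (ω : R) (j : Fin 3) :
    f ∘ g25Root ω j = g25Root (f ω) j := by
  fin_cases j <;> ext i <;> fin_cases i <;> simp [g25Root]

variable (φ : EisensteinInt →+* ℂ)

theorem herm_map {N : ℕ} (x y : Fin N → EisensteinInt) :
    herm (φ ∘ x) (φ ∘ y) = φ (x ⬝ᵥ star y) := by
  rw [herm_eq_dotProduct, RingHom.map_dotProduct]
  congr 1
  ext i
  exact (map_star φ (y i)).symm

theorem herm_map_self {N : ℕ} (x : Fin N → EisensteinInt) :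
    herm (φ ∘ x) (φ ∘ x) = ((∑ i, (x i).norm : ℤ) : ℂ) := by
  simp only [herm_eq_dotProduct, dotProduct, Int.cast_sum, map_norm φ, Pi.star_apply,
    Function.comp_apply]

theorem reflMat_map_mulVec {N : ℕ} {p x z : Fin N → EisensteinInt} {u : EisensteinInt}
    (hp : p ⬝ᵥ star p ≠ 0)
    (h : (p ⬝ᵥ star p) • z = (p ⬝ᵥ star p) • x - ((1 - u) * (x ⬝ᵥ star p)) • p) :
    reflMat (φ ∘ p) (φ u) *ᵥ (φ ∘ x) = φ ∘ z := by
  have hp' : φ (p ⬝ᵥ star p) ≠ 0 := (map_ne_zero_iff φ (map_injective φ)).2 hp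
  ext i
  have hi := congrArg φ (congrFun h i)
  simp only [Pi.smul_apply, Pi.sub_apply, smul_eq_mul, map_mul, map_sub, map_one] at hi
  simp only [reflMat_mulVec, herm_map, Pi.sub_apply, Pi.smul_apply, smul_eq_mul,
    Function.comp_apply]
  field_simp
  linear_combination -hi

theorem g25Root_dotProduct_star_ne_zero (j : Fin 3) :
    g25Root omega j ⬝ᵥ star (g25Root omega j) ≠ 0 := by
  revert j; decide

theorem map_omega_pow_three : φ omega ^ 3 = 1 := by
  rw [← map_pow, ← map_one φ]
  congr 1

theorem map_omega_ne_zero : φ omega ≠ 0 := by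
  intro h
  simpa [h] using map_omega_pow_three φ

theorem reflMat_mem_g25 (j : Fin 3) : reflMat (φ ∘ g25Root omega j) (φ omega) ∈ g25 (φ omega) := by
  rw [map_g25Root]
  exact reflMat_mem_reflMonoid j

theorem g25_le_unitaryGroup : g25 (φ omega) ≤ unitaryGroup (Fin 3) ℂ :=
  reflMonoid_le_unitaryGroup three_ne_zero (map_omega_pow_three φ)

theorem conjTranspose_mem_g25 {M : Matrix (Fin 3) (Fin 3) ℂ} (hM : M ∈ g25 (φ omega)) :
    Mᴴ ∈ g25 (φ omega) :=
  conjTranspose_mem_reflMonoid three_ne_zero (map_omega_pow_three φ) hM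

theorem reflMat_single_two_mem_g25 : reflMat (Pi.single 2 1) (φ omega) ∈ g25 (φ omega) := by
  convert reflMat_mem_g25 φ 0 using 2
  ext i; fin_cases i <;> simp [g25Root]

theorem reflMat_single_zero_mem_g25 : reflMat (Pi.single 0 1) (φ omega) ∈ g25 (φ omega) := by
  convert reflMat_mem_g25 φ 2 using 2
  ext i; fin_cases i <;> simp [g25Root]

theorem map_theta_ne_zero : φ theta ≠ 0 :=
  (map_ne_zero_iff φ (map_injective φ)).2 (by decide)

theorem map_comp_single {ι : Type*} [DecidableEq ι] (j : ι) (z : EisensteinInt) :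
    φ ∘ Pi.single j z = φ z • (Pi.single j 1 : ι → ℂ) := by
  ext i
  rcases eq_or_ne i j with rfl | hij <;> simp [*]

-- The reflection in `(ω, ω², 1)` moves `θ e_0` and `θ e_1` to vectors which differ, up to a scalar,
-- by a diagonal element already known to lie in the group.
theorem exists_mem_g25_mulVec_single_zero :
    ∃ U ∈ g25 (φ omega), U *ᵥ Pi.single 0 1 = φ omega ^ 2 • (Pi.single 1 1 : Fin 3 → ℂ) := by
  set s := reflMat (φ ∘ g25Root omega 1) (φ omega)
  have hs : s ∈ g25 (φ omega) := reflMat_mem_g25 φ 1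
  have hs₀ : s *ᵥ (φ ∘ Pi.single 0 theta) = φ ∘ ![1, omega ^ 2, 1] :=
    reflMat_map_mulVec φ (g25Root_dotProduct_star_ne_zero 1) (by decide)
  have hs₁ : s *ᵥ (φ ∘ Pi.single 1 theta) = φ ∘ ![1, 1, omega ^ 2] :=
    reflMat_map_mulVec φ (g25Root_dotProduct_star_ne_zero 1) (by decide)
  set d : Matrix (Fin 3) (Fin 3) ℂ :=
    reflMat (Pi.single 0 1) (φ omega) ^ 2 * reflMat (Pi.single 2 1) (φ omega) with hd
  have hdmem : d ∈ g25 (φ omega) :=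
    mul_mem (pow_mem (reflMat_single_zero_mem_g25 φ) 2) (reflMat_single_two_mem_g25 φ)
  have hd₀ : d *ᵥ (φ ∘ ![1, omega ^ 2, 1]) = φ omega ^ 2 • (φ ∘ ![1, 1, omega ^ 2]) := by
    rw [hd, reflMat_single, reflMat_single, diagonal_pow, diagonal_mul_diagonal]
    ext i
    fin_cases i <;> simp [mulVec_diagonal]
    linear_combination -φ omega * map_omega_pow_three φ
  refine ⟨sᴴ * (d * s), mul_mem (conjTranspose_mem_g25 φ hs) (mul_mem hdmem hs), ?_⟩
  refine smul_right_injective _ (map_theta_ne_zero φ) ?_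
  change φ theta • _ = φ theta • _
  rw [smul_comm, ← mulVec_smul, ← map_comp_single, ← map_comp_single, ← mulVec_mulVec,
    ← mulVec_mulVec, hs₀, hd₀, ← hs₁, mulVec_smul, mulVec_mulVec, ← star_eq_conjTranspose,
    mem_unitaryGroup_iff'.1 (g25_le_unitaryGroup φ hs), one_mulVec]

theorem reflMat_single_mem_g25 (j : Fin 3) :
    reflMat (Pi.single j 1) (φ omega) ∈ g25 (φ omega) := by
  fin_cases j
  · exact reflMat_single_zero_mem_g25 φ
  · obtain ⟨U, hU, hUe⟩ := exists_mem_g25_mulVec_single_zero φ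
    have h := reflMat_mulVec_root (v := Pi.single 0 1) (lam := φ omega) (g25_le_unitaryGroup φ hU)
    rw [hUe, reflMat_smul (pow_ne_zero 2 (map_omega_ne_zero φ))] at h
    exact h ▸ mul_mem (mul_mem hU (reflMat_single_zero_mem_g25 φ)) (conjTranspose_mem_g25 φ hU)
  · exact reflMat_single_two_mem_g25 φ

theorem diagonal_mem_g25 (k : Fin 3 → ℕ) : diagonal (fun i ↦ φ omega ^ k i) ∈ g25 (φ omega) := by
  have h : diagonal (fun i ↦ φ omega ^ k i) = reflMat (Pi.single 0 1) (φ omega) ^ k 0 *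
      reflMat (Pi.single 1 1) (φ omega) ^ k 1 * reflMat (Pi.single 2 1) (φ omega) ^ k 2 := by
    simp only [reflMat_single, diagonal_pow, diagonal_mul_diagonal]
    congr 1
    ext i
    fin_cases i <;> simp
  rw [h]
  exact mul_mem (mul_mem (pow_mem (reflMat_single_mem_g25 φ 0) _)
    (pow_mem (reflMat_single_mem_g25 φ 1) _)) (pow_mem (reflMat_single_mem_g25 φ 2) _)

/-- Two vectors of `ℤ[ω]³` are linked when some element of `G₂₅` carries the first to the second. -/
def Linked (x y : Fin 3 → EisensteinInt) : Prop :=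
  ∃ M ∈ g25 (φ omega), M *ᵥ (φ ∘ x) = φ ∘ y

namespace Linked

variable {φ} {x y z : Fin 3 → EisensteinInt}

theorem symm (h : Linked φ x y) : Linked φ y x := by
  obtain ⟨M, hM, hxy⟩ := h
  refine ⟨Mᴴ, conjTranspose_mem_g25 φ hM, ?_⟩
  rw [← hxy, mulVec_mulVec, ← star_eq_conjTranspose,
    mem_unitaryGroup_iff'.1 (g25_le_unitaryGroup φ hM), one_mulVec]

theorem trans (h : Linked φ x y) (h' : Linked φ y z) : Linked φ x z := by
  obtain ⟨M, hM, hxy⟩ := h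
  obtain ⟨M', hM', hyz⟩ := h'
  exact ⟨M' * M, mul_mem hM' hM, by rw [← mulVec_mulVec, hxy, hyz]⟩

theorem smul (c : EisensteinInt) (h : Linked φ x y) : Linked φ (c • x) (c • y) := by
  have hcomp : ∀ v : Fin 3 → EisensteinInt, φ ∘ (c • v) = φ c • (φ ∘ v) := fun v ↦ by
    ext; simp
  obtain ⟨M, hM, hxy⟩ := h
  exact ⟨M, hM, by rw [hcomp, hcomp, mulVec_smul, hxy]⟩

theorem omega_pow_mul (k : Fin 3 → ℕ) (x : Fin 3 → EisensteinInt) :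
    Linked φ x (fun i ↦ omega ^ k i * x i) :=
  ⟨_, diagonal_mem_g25 φ k, by ext i; simp [mulVec_diagonal]⟩

theorem omega_pow_one (k : Fin 3 → ℕ) : Linked φ (fun i ↦ omega ^ k i) 1 := by
  simpa using (omega_pow_mul k 1).symm

theorem single_theta_one (j : Fin 3) : Linked φ (Pi.single j theta) 1 := by
  obtain ⟨k, hk⟩ : ∃ k : Fin 3 → Fin 3,
      (3 : EisensteinInt) • (fun i ↦ omega ^ (k i : ℕ)) = (3 : EisensteinInt) • Pi.single j theta -
        ((1 - omega) * (Pi.single j theta ⬝ᵥ star (g25Root omega 1))) • g25Root omega 1 := by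
    revert j; decide +kernel
  have hs : Linked φ (Pi.single j theta) (fun i ↦ omega ^ (k i : ℕ)) :=
    ⟨_, reflMat_mem_g25 φ 1, reflMat_map_mulVec φ (g25Root_dotProduct_star_ne_zero 1) hk⟩
  exact hs.trans (omega_pow_one _)

theorem single_theta_neg_one (j : Fin 3) : Linked φ (Pi.single j theta) (-1) := by
  obtain ⟨k, hk⟩ : ∃ k : Fin 3 → Fin 3,
      (3 : EisensteinInt) • (fun i ↦ omega ^ (k i : ℕ) * -1) =
        (3 : EisensteinInt) • Pi.single j theta -
        ((1 - omega ^ 2) * (Pi.single j theta ⬝ᵥ star (g25Root omega 1))) • g25Root omega 1 := by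
    revert j; decide +kernel
  have hs : Linked φ (Pi.single j theta) (fun i ↦ omega ^ (k i : ℕ) * -1) := by
    refine ⟨_, pow_mem (reflMat_mem_g25 φ 1) 2, ?_⟩
    rw [reflMat_pow, ← map_pow]
    exact reflMat_map_mulVec φ (g25Root_dotProduct_star_ne_zero 1) hk
  exact hs.trans (omega_pow_mul (fun i ↦ (k i : ℕ)) (-1)).symm

theorem unit_smul_one (ε : ℤˣ) (j : Fin 3) :
    Linked φ (((ε : ℤ) : EisensteinInt) • 1) (Pi.single j theta) := by
  rcases Int.units_eq_one_or ε with rfl | rfl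
  · simpa using (single_theta_one j).symm
  · simpa using (single_theta_neg_one j).symm

theorem single_theta_of_mem_rootLattice (hx : x ∈ rootLattice) (hnorm : ∑ i, (x i).norm = 3) :
    Linked φ x (Pi.single 0 theta) := by
  by_cases h₀ : theta ∣ x 0
  · have hdvd : ∀ i, theta ∣ x i := fun i ↦ by simpa using dvd_add (hx i 0) h₀
    obtain ⟨ε, k, j, rfl⟩ := eq_single_of_theta_dvd_of_sum_norm_eq_three hdvd hnorm
    have hpow : (Pi.single j (omega ^ k * theta) : Fin 3 → EisensteinInt) =
        fun i ↦ omega ^ k * Pi.single (M := fun _ ↦ EisensteinInt) j theta i := by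
      ext1 i
      rcases eq_or_ne i j with rfl | hij <;> simp [*]
    rw [hpow]
    exact (((omega_pow_mul _ _).symm.trans (single_theta_one j)).smul _).trans (unit_smul_one ε 0)
  · obtain ⟨ε, k, rfl⟩ := eq_pow_of_not_theta_dvd_of_sum_norm_eq_three hx h₀ hnorm
    exact ((omega_pow_one k).smul _).trans (unit_smul_one ε 0)

end Linked

end G25

section DiscriminantKernel

open EisensteinInt

variable (φ : EisensteinInt →+* ℂ)

/-- The discriminant kernel of the `E₆` root lattice `L` over `ℤ[ω]`: the unitary matrices which act
trivially on the quotient of the weight lattice by `L`. The embedding `φ` realises the lattices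
in `ℂ³`. -/
def discriminantKernel : Submonoid (Matrix (Fin 3) (Fin 3) ℂ) where
  carrier := {M | M ∈ unitaryGroup (Fin 3) ℂ ∧
    ∀ y ∈ weightLattice, ∃ x ∈ rootLattice, M *ᵥ (φ ∘ y) = φ ∘ (y + x)}
  one_mem' := ⟨one_mem _, fun y _ ↦ ⟨0, zero_mem _, by rw [one_mulVec, add_zero]⟩⟩
  mul_mem' := by
    rintro M M' ⟨hMU, hM⟩ ⟨hMU', hM'⟩
    refine ⟨mul_mem hMU hMU', fun y hy ↦ ?_⟩
    obtain ⟨x', hx', hyx'⟩ := hM' y hy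
    obtain ⟨x, hx, hyx⟩ := hM (y + x') (add_mem hy (rootLattice_le_weightLattice hx'))
    exact ⟨x' + x, add_mem hx' hx, by rw [← mulVec_mulVec, hyx', hyx, add_assoc]⟩

variable {φ}

theorem sum_norm_eq_of_mulVec {N : ℕ} {M : Matrix (Fin N) (Fin N) ℂ}
    (hM : M ∈ unitaryGroup (Fin N) ℂ) {x y : Fin N → EisensteinInt} (h : M *ᵥ (φ ∘ x) = φ ∘ y) :
    ∑ i, (y i).norm = ∑ i, (x i).norm := by
  have hherm : herm (φ ∘ y) (φ ∘ y) = herm (φ ∘ x) (φ ∘ x) := by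
    rw [← h, herm_mulVec_mulVec hM]
  rw [herm_map_self, herm_map_self] at hherm
  exact_mod_cast hherm

theorem exists_smul_g25Root_mem_rootLattice (j : Fin 3) {y : Fin 3 → EisensteinInt}
    (hy : y ∈ weightLattice) :
    ∃ t : EisensteinInt, t • g25Root omega j ∈ rootLattice ∧
      (g25Root omega j ⬝ᵥ star (g25Root omega j)) * t = theta * (y ⬝ᵥ star (g25Root omega j)) := by
  have hsingle : ∀ (i : Fin 3) (t : EisensteinInt),
      (theta * t) • (Pi.single i 1 : Fin 3 → EisensteinInt) ∈ rootLattice := fun i t ↦ by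
    simpa [← Pi.single_smul] using single_theta_mul_mem_rootLattice i t
  have hstar : ∀ i, star (Pi.single i 1 : Fin 3 → EisensteinInt) = Pi.single i 1 := fun i ↦ by
    rw [← Pi.single_star, star_one]
  have hmid : g25Root omega 1 ∈ rootLattice := fun i k ↦
    theta_dvd_iff.2 (by revert i k; decide)
  fin_cases j
  · have h : g25Root omega 0 = Pi.single 2 1 := by decide
    exact ⟨theta * y 2, h ▸ hsingle 2 _, by simp [h, hstar]⟩
  · obtain ⟨s, hs⟩ := theta_dvd_dotProduct_star hmid hy
    have h : g25Root omega 1 ⬝ᵥ star (g25Root omega 1) = 3 := by decide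
    have hθ : theta * theta = 3 * -omega := by decide
    exact ⟨-omega * s, Submodule.smul_mem _ _ hmid, by
      simp only [Fin.mk_one, h, hs]; linear_combination -s * hθ⟩
  · have h : g25Root omega 2 = Pi.single 0 1 := by decide
    exact ⟨theta * y 0, h ▸ hsingle 0 _, by simp [h, hstar]⟩

theorem g25_le_discriminantKernel : g25 (φ omega) ≤ discriminantKernel φ := by
  refine Submonoid.closure_le.2 ?_
  rintro _ ⟨j, rfl⟩
  refine ⟨g25_le_unitaryGroup φ (reflMat_mem_reflMonoid j), fun y hy ↦ ?_⟩
  obtain ⟨t, ht, hyt⟩ := exists_smul_g25Root_mem_rootLattice j hy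
  refine ⟨_, neg_mem ht, ?_⟩
  rw [← map_g25Root]
  refine reflMat_map_mulVec φ (g25Root_dotProduct_star_ne_zero j) ?_
  rw [smul_add, smul_neg, smul_smul, hyt, theta, ← sub_eq_add_neg]

theorem mulVec_apply_eq_of_mulVec_single {N : ℕ} {M : Matrix (Fin N) (Fin N) ℂ}
    (hM : M ∈ unitaryGroup (Fin N) ℂ) {i : Fin N} (hfix : M *ᵥ Pi.single i 1 = Pi.single i 1)
    (v : Fin N → ℂ) : (M *ᵥ v) i = v i := by
  have hfix' : Mᴴ *ᵥ Pi.single i 1 = Pi.single i 1 := by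
    nth_rw 1 [← hfix]
    rw [mulVec_mulVec, ← star_eq_conjTranspose, mem_unitaryGroup_iff'.1 hM, one_mulVec]
  have hrow : Pi.single i 1 ᵥ* M = Pi.single i 1 := by
    have h := congrArg star hfix'
    rwa [star_mulVec, conjTranspose_conjTranspose, ← Pi.single_star, star_one] at h
  rw [← single_one_dotProduct i (M *ᵥ v), dotProduct_mulVec, hrow, single_one_dotProduct]

theorem exists_mulVec_single_eq_of_mulVec_single_zero {M : Matrix (Fin 3) (Fin 3) ℂ}
    (hM : M ∈ discriminantKernel φ) (hfix : M *ᵥ Pi.single 0 1 = Pi.single 0 1) (j : Fin 3) :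
    ∃ k : ℕ, M *ᵥ Pi.single j 1 = φ omega ^ k • (Pi.single j 1 : Fin 3 → ℂ) := by
  rcases eq_or_ne j 0 with rfl | hj
  · exact ⟨0, by rw [hfix, pow_zero, one_smul]⟩
  have hy : Pi.single j 1 - Pi.single 0 1 ∈ weightLattice := by
    simp [weightLattice]
  obtain ⟨x, hx, hMx⟩ := hM.2 _ hy
  have hMj : M *ᵥ (φ ∘ Pi.single j 1) = φ ∘ (Pi.single j 1 + x) := by
    have hsplit : φ ∘ Pi.single j 1 = φ ∘ (Pi.single j 1 - Pi.single 0 1) + Pi.single 0 1 := by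
      ext i
      rcases eq_or_ne i 0 with rfl | hi <;> simp [*]
    rw [hsplit, mulVec_add, hMx, hfix]
    ext i
    rcases eq_or_ne i 0 with rfl | hi
    · simp [hj.symm]
    · simp [hi]
  have hx₀ : x 0 = 0 := by
    have h := congrFun hMj 0
    rw [mulVec_apply_eq_of_mulVec_single hM.1 hfix] at h
    refine map_injective φ ?_
    simpa using h
  have hθx : ∀ i, theta ∣ x i := fun i ↦ by simpa [hx₀] using hx i 0
  obtain ⟨i, u, hu, hxu⟩ := exists_eq_single_of_sum_norm_eq_one
    ((sum_norm_eq_of_mulVec hM.1 hMj).trans (by fin_cases j <;> decide))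
  obtain rfl : j = i := by
    by_contra hji
    have h : 1 + x j = 0 := by simpa [hji] using congrFun hxu j
    have hθ : ¬theta ∣ -1 := by rw [theta_dvd_iff]; decide
    exact hθ (eq_neg_of_add_eq_zero_right h ▸ hθx j)
  have hu₁ : theta ∣ u - 1 := by
    have h := congrFun hxu j
    simp only [Pi.add_apply, Pi.single_eq_same] at h
    rw [← h, add_sub_cancel_left]
    exact hθx j
  obtain ⟨k, rfl⟩ := eq_omega_pow_of_norm_eq_one hu hu₁
  exact ⟨k, by simpa [hxu, map_comp_single] using hMj⟩

theorem mem_g25_of_mem_discriminantKernel_of_mulVec_single_zero {M : Matrix (Fin 3) (Fin 3) ℂ}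
    (hM : M ∈ discriminantKernel φ) (hfix : M *ᵥ Pi.single 0 1 = Pi.single 0 1) :
    M ∈ g25 (φ omega) := by
  choose k hk using exists_mulVec_single_eq_of_mulVec_single_zero hM hfix
  have hdiag : M = diagonal (fun i ↦ φ omega ^ k i) := by
    refine Matrix.ext_of_mulVec_single fun j ↦ ?_
    rw [hk, diagonal_mulVec_single]
    ext i
    simp [Pi.single_apply]
  exact hdiag ▸ diagonal_mem_g25 φ k

theorem discriminantKernel_le_g25 : discriminantKernel φ ≤ g25 (φ omega) := by
  intro M hM
  have hθ : Pi.single 0 theta ∈ rootLattice := by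
    simpa using single_theta_mul_mem_rootLattice 0 1
  obtain ⟨x, hx, hMx⟩ := hM.2 _ (rootLattice_le_weightLattice hθ)
  obtain ⟨U, hU, hUx⟩ : Linked φ (Pi.single 0 theta + x) (Pi.single 0 theta) := by
    refine Linked.single_theta_of_mem_rootLattice (add_mem hθ hx) ?_
    rw [sum_norm_eq_of_mulVec hM.1 hMx]
    decide
  have hfix : (U * M) *ᵥ Pi.single 0 1 = Pi.single 0 1 := by
    refine smul_right_injective _ (map_theta_ne_zero φ) ?_
    change φ theta • _ = φ theta • _
    rw [← mulVec_smul, ← map_comp_single, ← mulVec_mulVec, hMx, hUx]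
  have hUM := mem_g25_of_mem_discriminantKernel_of_mulVec_single_zero
    (mul_mem (g25_le_discriminantKernel hU) hM) hfix
  have hM' : M = Uᴴ * (U * M) := by
    rw [← mul_assoc, ← star_eq_conjTranspose,
      mem_unitaryGroup_iff'.1 (g25_le_unitaryGroup φ hU), one_mul]
  rw [hM']
  exact mul_mem (conjTranspose_mem_g25 φ hU) hUM

theorem g25_eq_discriminantKernel : g25 (φ omega) = discriminantKernel φ :=
  le_antisymm g25_le_discriminantKernel discriminantKernel_le_g25

end DiscriminantKernel

section Intertwining

variable {m n k : ℕ} {P : Matrix (Fin m) (Fin n) ℂ} {Q : Matrix (Fin k) (Fin n) ℂ} {r : ℂ}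

theorem eigSpace_eq_range_conjTranspose {T : Matrix (Fin n) (Fin n) ℂ} {μ ν : ℂ} (hμν : μ ≠ ν)
    (hr : r ≠ 0) (hP : P * T = μ • P) (hQ : Q * T = ν • Q) (hres : Pᴴ * P + Qᴴ * Q = r • 1)
    (hPP : P * Pᴴ = r • 1) (hQP : Q * Pᴴ = 0) :
    eigSpace T μ = LinearMap.range Pᴴ.mulVecLin := by
  ext v
  rw [eigSpace, Module.End.mem_eigenspace_iff, mulVecLin_apply, LinearMap.mem_range]
  constructor
  · intro hv
    have hQv : Q *ᵥ v = 0 := by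
      have h : ν • (Q *ᵥ v) = μ • (Q *ᵥ v) := by
        rw [← smul_mulVec, ← hQ, ← mulVec_mulVec, hv, mulVec_smul]
      rw [← sub_eq_zero, ← sub_smul] at h
      exact (smul_eq_zero.1 h).resolve_left (sub_ne_zero.2 hμν.symm)
    refine ⟨r⁻¹ • (P *ᵥ v), ?_⟩
    have h := congrArg (· *ᵥ v) hres
    simp only [add_mulVec, ← mulVec_mulVec, hQv, mulVec_zero, add_zero, smul_mulVec,
      one_mulVec] at h
    rw [mulVecLin_apply, mulVec_smul, h, inv_smul_smul₀ hr]
  · rintro ⟨t, rfl⟩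
    have hTP : T * Pᴴ = μ • Pᴴ := by
      refine smul_right_injective _ hr ?_
      calc r • (T * Pᴴ) = (Pᴴ * P + Qᴴ * Q) * (T * Pᴴ) := by
            rw [hres, smul_mul, Matrix.one_mul]
        _ = Pᴴ * (P * T * Pᴴ) + Qᴴ * (Q * T * Pᴴ) := by simp only [Matrix.add_mul, Matrix.mul_assoc]
        _ = r • (μ • Pᴴ) := by
            rw [hP, hQ, smul_mul, smul_mul, hPP, hQP, smul_zero, Matrix.mul_zero, add_zero,
              smul_comm, Matrix.mul_smul, Matrix.mul_smul, Matrix.mul_one]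
    rw [mulVecLin_apply, mulVec_mulVec, hTP, smul_mulVec]

variable {M : Matrix (Fin n) (Fin n) ℂ} {M' : Matrix (Fin m) (Fin m) ℂ}

theorem mul_conjTranspose_eq_of_mul_eq (hM : M ∈ unitaryGroup (Fin n) ℂ)
    (hM' : M' ∈ unitaryGroup (Fin m) ℂ) (h : P * M = M' * P) : M * Pᴴ = Pᴴ * M' := by
  have hstar : M'ᴴ * P = P * Mᴴ := by
    rw [← Matrix.mul_one (M'ᴴ * P), ← mem_unitaryGroup_iff.1 hM, star_eq_conjTranspose,
      ← Matrix.mul_assoc, Matrix.mul_assoc M'ᴴ, h, ← Matrix.mul_assoc, ← star_eq_conjTranspose M',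
      mem_unitaryGroup_iff'.1 hM', Matrix.one_mul]
  simpa only [conjTranspose_mul, conjTranspose_conjTranspose] using (congrArg (·ᴴ) hstar).symm

theorem mem_unitaryGroup_of_mul_conjTranspose_eq (hr : r ≠ 0) (hPP : P * Pᴴ = r • 1)
    (hM : M ∈ unitaryGroup (Fin n) ℂ) (h : M * Pᴴ = Pᴴ * M') : M' ∈ unitaryGroup (Fin m) ℂ := by
  rw [mem_unitaryGroup_iff', star_eq_conjTranspose]
  refine smul_right_injective _ hr ?_
  calc r • (M'ᴴ * M') = (Pᴴ * M')ᴴ * (Pᴴ * M') := by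
        rw [conjTranspose_mul, conjTranspose_conjTranspose, Matrix.mul_assoc, ← Matrix.mul_assoc P,
          hPP, smul_mul, Matrix.one_mul, Matrix.mul_smul]
    _ = P * (Mᴴ * M) * Pᴴ := by
        rw [← h, conjTranspose_mul, conjTranspose_conjTranspose]
        simp only [Matrix.mul_assoc]
    _ = r • 1 := by
        rw [← star_eq_conjTranspose M, mem_unitaryGroup_iff'.1 hM, Matrix.mul_one, hPP]

theorem mul_eq_of_mul_conjTranspose_eq (hM : M ∈ unitaryGroup (Fin n) ℂ)
    (hM' : M' ∈ unitaryGroup (Fin m) ℂ) (h : M * Pᴴ = Pᴴ * M') : P * M = M' * P := by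
  have h' := mul_conjTranspose_eq_of_mul_eq (P := Pᴴ) hM' hM h.symm
  rwa [conjTranspose_conjTranspose, eq_comm] at h'

theorem conjTranspose_mulVecLin_injective (hr : r ≠ 0) (hPP : P * Pᴴ = r • 1) :
    Function.Injective Pᴴ.mulVecLin := by
  refine (injective_iff_map_eq_zero _).2 fun t ht ↦ ?_
  have h := congrArg (P *ᵥ ·) ht
  simp only [mulVecLin_apply, mulVec_mulVec, hPP, smul_mulVec, one_mulVec, mulVec_zero] at h
  exact (smul_eq_zero.1 h).resolve_left hr

theorem mul_conjTranspose_eq_iff : M * Pᴴ = Pᴴ * M' ↔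
    (∀ v ∈ LinearMap.range Pᴴ.mulVecLin, M *ᵥ v ∈ LinearMap.range Pᴴ.mulVecLin) ∧
      ∀ t, M *ᵥ Pᴴ.mulVecLin t = Pᴴ.mulVecLin (M' *ᵥ t) := by
  have hmulVec : M * Pᴴ = Pᴴ * M' ↔ ∀ t, M *ᵥ Pᴴ.mulVecLin t = Pᴴ.mulVecLin (M' *ᵥ t) := by
    simp only [mulVecLin_apply, mulVec_mulVec]
    exact ⟨fun h t ↦ by rw [h], fun h ↦ Matrix.ext_of_mulVec_single fun i ↦ h _⟩
  rw [hmulVec, iff_and_self]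
  rintro h _ ⟨t, rfl⟩
  exact ⟨_, (h t).symm⟩

end Intertwining

section SimpleReflections

open EisensteinInt

/-- The matrix whose columns are the roots `a i`. -/
abbrev rootMatrix {ι : Type*} {N : ℕ} (a : ι → Fin N → ℂ) : Matrix (Fin N) ι ℂ := (of a)ᵀ

theorem conjTranspose_rootMatrix_mul_rootMatrix {ι : Type*} {N : ℕ} (a : ι → Fin N → ℂ)
    (i j : ι) : ((rootMatrix a)ᴴ * rootMatrix a) i j = herm (a j) (a i) := by
  simp [herm, mul_apply, mul_comm]

variable {ι : Type*} [Fintype ι] [DecidableEq ι]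

/-- The matrix of the `i`-th simple reflection in the basis of simple roots, for the symmetric
Cartan matrix `C`. -/
def simpleReflection {R : Type*} [Ring R] (C : Matrix ι ι R) (i : ι) : Matrix ι ι R :=
  1 - single i i 1 * C

variable {N : ℕ} {a : ι → Fin N → ℂ} {c : ℂ} {C : Matrix ι ι EisensteinInt}
  {φ : EisensteinInt →+* ℂ}

theorem reflMat_mul_rootMatrix (hc : c ≠ 0)
    (hgram : (rootMatrix a)ᴴ * rootMatrix a = c • C.map φ) {i : ι} (hi : C i i = 2) :
    reflMat (a i) (-1) * rootMatrix a = rootMatrix a * (simpleReflection C i).map φ := by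
  have hherm : ∀ j, herm (a j) (a i) = c * φ (C i j) := fun j ↦ by
    rw [← conjTranspose_rootMatrix_mul_rootMatrix, hgram, Matrix.smul_apply, map_apply, smul_eq_mul]
  ext k j
  have hl : (reflMat (a i) (-1) * rootMatrix a) k j = (reflMat (a i) (-1) *ᵥ a j) k := rfl
  have hr : (rootMatrix a * (simpleReflection C i).map φ) k j = a j k - φ (C i j) * a i k := by
    have hS (l : ι) : simpleReflection C i l j =
        (if l = j then 1 else 0) - if l = i then C i j else 0 := by
      rcases eq_or_ne l i with rfl | hl <;> simp [simpleReflection, one_apply, *]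
    simp [mul_apply, hS, apply_ite φ, mul_sub, mul_comm]
  rw [hl, hr, reflMat_mulVec, hherm, hherm, hi, map_ofNat]
  simp only [Pi.sub_apply, Pi.smul_apply, smul_eq_mul]
  field_simp
  ring

theorem prod_reflMat_mul_rootMatrix (hc : c ≠ 0)
    (hgram : (rootMatrix a)ᴴ * rootMatrix a = c • C.map φ) (hC : ∀ i, C i i = 2) (l : List ι) :
    (l.map fun i ↦ reflMat (a i) (-1)).prod * rootMatrix a =
      rootMatrix a * (l.map (simpleReflection C)).prod.map φ := by
  induction l with
  | nil => simp
  | cons i l ih =>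
    rw [List.map_cons, List.prod_cons, Matrix.mul_assoc, ih, ← Matrix.mul_assoc,
      reflMat_mul_rootMatrix hc hgram (hC i), List.map_cons, List.prod_cons, Matrix.map_mul,
      Matrix.mul_assoc]

theorem exists_mul_rootMatrix_eq (hc : c ≠ 0)
    (hgram : (rootMatrix a)ᴴ * rootMatrix a = c • C.map φ) (hC : ∀ i, C i i = 2)
    {M : Matrix (Fin N) (Fin N) ℂ} (hM : M ∈ reflMonoid a (-1)) :
    ∃ Z : Matrix ι ι EisensteinInt, M * rootMatrix a = rootMatrix a * (1 + Z * C).map φ := by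
  induction hM using Submonoid.closure_induction with
  | mem M hM =>
    obtain ⟨i, rfl⟩ := hM
    refine ⟨-single i i 1, ?_⟩
    rw [reflMat_mul_rootMatrix hc hgram (hC i), simpleReflection, Matrix.neg_mul, sub_eq_add_neg]
  | one => exact ⟨0, by simp⟩
  | mul M M' _ _ ih ih' =>
    obtain ⟨Z, hZ⟩ := ih
    obtain ⟨Z', hZ'⟩ := ih'
    refine ⟨Z + Z' + Z * C * Z', ?_⟩
    rw [Matrix.mul_assoc, hZ', ← Matrix.mul_assoc, hZ, Matrix.mul_assoc, ← Matrix.map_mul]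
    congr 2
    noncomm_ring

end SimpleReflections

section E6

open EisensteinInt

/-- The Cartan matrix of `E₆` with entries in a ring, the simple roots being ordered so that the
first five form a chain and the last one is attached to the third. -/
def e6Cartan (R : Type*) [Ring R] : Matrix (Fin 6) (Fin 6) R :=
  (CartanMatrix.E₆.submatrix ![0, 2, 3, 4, 5, 1] ![0, 2, 3, 4, 5, 1]).map (↑)

/-- Three times the inverse of the Cartan matrix of `E₆`. -/
def e6CartanInv : Matrix (Fin 6) (Fin 6) EisensteinInt :=
  !![4, 5, 6, 4, 2, 3; 5, 10, 12, 8, 4, 6; 6, 12, 18, 12, 6, 9;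
    4, 8, 12, 10, 5, 6; 2, 4, 6, 5, 4, 3; 3, 6, 9, 6, 3, 6]

/-- The matrix whose columns are simple roots of `E₆` in `rootLattice`, chosen so that `ω` acts on
them as the fourth power of the Coxeter element. -/
def e6Roots : Matrix (Fin 3) (Fin 6) EisensteinInt :=
  !![0, ⟨0, 1⟩, ⟨-1, -2⟩, ⟨2, 1⟩, -1, ⟨0, 1⟩;
    0, ⟨-1, -1⟩, 0, 0, ⟨1, 1⟩, 1;
    ⟨-2, -1⟩, 1, 0, 0, ⟨0, -1⟩, ⟨0, 1⟩]

/-- Words in the simple reflections of `E₆` which act on `e6Roots` as the generating reflections of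
`G₂₅`. -/
def g25Word : Fin 3 → List (Fin 6) :=
  ![[0, 1, 2, 3, 4, 3, 2, 1], [1, 2, 5, 2], [2, 3]]

theorem map_e6Cartan {R S : Type*} [Ring R] [Ring S] (f : R →+* S) :
    (e6Cartan R).map f = e6Cartan S := by
  ext i j
  exact map_intCast f _

theorem isSymm_e6Cartan {R : Type*} [Ring R] : (e6Cartan R).IsSymm := by
  have h : (e6Cartan ℤ).IsSymm := by decide
  rw [← map_e6Cartan (Int.castRingHom R)]
  exact h.map _

theorem e6Cartan_diag (i : Fin 6) : e6Cartan EisensteinInt i i = 2 := by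
  revert i; decide

theorem e6Cartan_mul_e6CartanInv :
    e6Cartan EisensteinInt * e6CartanInv = (3 : EisensteinInt) • 1 := by
  decide +kernel

theorem e6Roots_trace_form :
    e6Rootsᴴ * e6Roots + (e6Roots.map star)ᴴ * e6Roots.map star =
      (3 : EisensteinInt) • e6Cartan EisensteinInt := by
  decide +kernel

theorem e6Roots_mul_e6CartanInv_mul_conjTranspose :
    e6Roots * e6CartanInv * e6Rootsᴴ = (9 : EisensteinInt) • 1 := by
  decide +kernel

theorem e6Roots_mul_e6CartanInv_mul_conjTranspose_star :
    e6Roots * e6CartanInv * (e6Roots.map star)ᴴ = 0 := by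
  decide +kernel

theorem e6Roots_col_mem_rootLattice (k : Fin 6) : e6Rootsᵀ k ∈ rootLattice := fun i j ↦
  theta_dvd_iff.2 (by revert i j k; decide)

/-- The matrix of the Coxeter element of `E₆` in the basis of simple roots. -/
def e6Coxeter : Matrix (Fin 6) (Fin 6) EisensteinInt :=
  ((List.finRange 6).map (simpleReflection (e6Cartan EisensteinInt))).prod

theorem e6Coxeter_eq : e6Coxeter =
    !![0, 0, 1, 0, -1, -1; 1, 0, 1, 0, -1, -1; 0, 1, 1, 0, -1, -1;
      0, 0, 1, 0, -1, 0; 0, 0, 0, 1, -1, 0; 0, 0, 1, 0, 0, -1] := by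
  decide +kernel

theorem e6Roots_mul_e6Coxeter_pow : e6Roots * e6Coxeter ^ 4 = omega • e6Roots := by
  rw [e6Coxeter_eq]
  decide +kernel

theorem e6Roots_star_mul_e6Coxeter_pow :
    e6Roots.map star * e6Coxeter ^ 4 = omega ^ 2 • e6Roots.map star := by
  rw [e6Coxeter_eq]
  decide +kernel

theorem g25Root_smul_e6Roots_mul_word (j : Fin 3) (k : Fin 6) :
    (g25Root omega j ⬝ᵥ star (g25Root omega j)) •
        (e6Roots * ((g25Word j).map (simpleReflection (e6Cartan EisensteinInt))).prod)ᵀ k =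
      (g25Root omega j ⬝ᵥ star (g25Root omega j)) • e6Rootsᵀ k -
        ((1 - omega) * (e6Rootsᵀ k ⬝ᵥ star (g25Root omega j))) • g25Root omega j := by
  revert j k
  decide +kernel

variable {φ : EisensteinInt →+* ℂ} {a : Fin 6 → Fin 6 → ℂ} {c : ℂ}

theorem conjTranspose_map {m n : ℕ} (X : Matrix (Fin m) (Fin n) EisensteinInt) :
    (X.map φ)ᴴ = Xᴴ.map φ := by
  ext i j
  exact (map_star φ _).symm

theorem map_ringHom_smul {m n : ℕ} (z : EisensteinInt)
    (X : Matrix (Fin m) (Fin n) EisensteinInt) : (z • X).map φ = φ z • X.map φ :=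
  Matrix.map_smulₛₗ φ φ z (map_mul φ z) X

theorem gram_mul_e6CartanInv (hc : c ≠ 0)
    (hgram : (rootMatrix a)ᴴ * rootMatrix a = c • (e6Cartan EisensteinInt).map φ) :
    (rootMatrix a)ᴴ * rootMatrix a * ((3 * c)⁻¹ • e6CartanInv.map φ) = 1 := by
  rw [hgram, smul_mul_smul_comm, ← Matrix.map_mul, e6Cartan_mul_e6CartanInv, map_ringHom_smul,
    map_ofNat, Matrix.map_one _ (map_zero φ) (map_one φ), smul_smul]
  convert one_smul ℂ _
  field_simp

theorem isUnit_det_rootMatrix (hc : c ≠ 0)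
    (hgram : (rootMatrix a)ᴴ * rootMatrix a = c • (e6Cartan EisensteinInt).map φ) :
    IsUnit (rootMatrix a).det := by
  have h := isUnit_det_of_right_inverse (gram_mul_e6CartanInv hc hgram)
  rw [det_mul] at h
  exact isUnit_of_mul_isUnit_right h

/-- The linear map `ℂ⁶ → ℂ³` which sends the root `a i` to the `i`-th column of `X`. -/
def rootMap (φ : EisensteinInt →+* ℂ) (a : Fin 6 → Fin 6 → ℂ)
    (X : Matrix (Fin 3) (Fin 6) EisensteinInt) : Matrix (Fin 3) (Fin 6) ℂ :=
  X.map φ * (rootMatrix a)⁻¹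

variable {X Y : Matrix (Fin 3) (Fin 6) EisensteinInt} {K : Matrix (Fin 6) (Fin 6) EisensteinInt}

theorem rootMap_mul {M : Matrix (Fin 6) (Fin 6) ℂ} (hA : IsUnit (rootMatrix a).det)
    (hM : M * rootMatrix a = rootMatrix a * K.map φ) :
    rootMap φ a X * M = rootMap φ a (X * K) := by
  have hinv : (rootMatrix a)⁻¹ * M = K.map φ * (rootMatrix a)⁻¹ := by
    rw [← mul_nonsing_inv_cancel_right _ M hA, hM, ← Matrix.mul_assoc, ← Matrix.mul_assoc,
      nonsing_inv_mul _ hA, Matrix.one_mul]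
  rw [rootMap, rootMap, Matrix.mul_assoc, hinv, Matrix.map_mul, Matrix.mul_assoc]

theorem rootMap_mul_rootMatrix (hA : IsUnit (rootMatrix a).det) :
    rootMap φ a X * rootMatrix a = X.map φ :=
  nonsing_inv_mul_cancel_right _ _ hA

theorem rootMap_smul (z : EisensteinInt) : rootMap φ a (z • X) = φ z • rootMap φ a X := by
  rw [rootMap, rootMap, map_ringHom_smul, Matrix.smul_mul]

theorem rootMap_mul_conjTranspose (hc : c ≠ 0)
    (hgram : (rootMatrix a)ᴴ * rootMatrix a = c • (e6Cartan EisensteinInt).map φ) :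
    rootMap φ a X * (rootMap φ a Y)ᴴ = (3 * c)⁻¹ • (X * e6CartanInv * Yᴴ).map φ := by
  rw [rootMap, rootMap, conjTranspose_mul, conjTranspose_map, conjTranspose_nonsing_inv,
    Matrix.mul_assoc, ← Matrix.mul_assoc (rootMatrix a)⁻¹, ← Matrix.mul_inv_rev,
    inv_eq_right_inv (gram_mul_e6CartanInv hc hgram), Matrix.map_mul, Matrix.map_mul,
    Matrix.smul_mul, Matrix.mul_smul, Matrix.mul_assoc]

theorem rootMap_e6Roots_mul_conjTranspose (hc : c ≠ 0)
    (hgram : (rootMatrix a)ᴴ * rootMatrix a = c • (e6Cartan EisensteinInt).map φ) :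
    rootMap φ a e6Roots * (rootMap φ a e6Roots)ᴴ = (3 / c) • 1 := by
  rw [rootMap_mul_conjTranspose hc hgram, e6Roots_mul_e6CartanInv_mul_conjTranspose,
    map_ringHom_smul, map_ofNat, Matrix.map_one _ (map_zero φ) (map_one φ), smul_smul]
  congr 1
  field_simp
  norm_num

theorem rootMap_resolution (hc : c ≠ 0)
    (hgram : (rootMatrix a)ᴴ * rootMatrix a = c • (e6Cartan EisensteinInt).map φ) :
    (rootMap φ a e6Roots)ᴴ * rootMap φ a e6Roots +
      (rootMap φ a (e6Roots.map star))ᴴ * rootMap φ a (e6Roots.map star) = (3 / c) • 1 := by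
  have hA := isUnit_det_rootMatrix hc hgram
  have hcartan : (e6Cartan EisensteinInt).map φ = c⁻¹ • ((rootMatrix a)ᴴ * rootMatrix a) := by
    rw [hgram, inv_smul_smul₀ hc]
  have hinv : (rootMatrix a)⁻¹ᴴ * (rootMatrix a)ᴴ = 1 := by
    rw [← conjTranspose_mul, mul_nonsing_inv _ hA, conjTranspose_one]
  have hprod : ∀ X, (rootMap φ a X)ᴴ * rootMap φ a X =
      (rootMatrix a)⁻¹ᴴ * ((Xᴴ * X).map φ * (rootMatrix a)⁻¹) := fun X ↦ by
    rw [rootMap, conjTranspose_mul, conjTranspose_map, Matrix.map_mul]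
    simp only [Matrix.mul_assoc]
  rw [hprod, hprod, ← Matrix.mul_add, ← Matrix.add_mul, ← Matrix.map_add φ (map_add φ),
    e6Roots_trace_form, map_ringHom_smul, map_ofNat, hcartan, smul_smul, Matrix.smul_mul,
    Matrix.mul_smul, Matrix.mul_assoc, mul_nonsing_inv _ hA, Matrix.mul_one, hinv, div_eq_mul_inv]

theorem reflMat_mul_map_e6Roots (j : Fin 3) :
    (reflMat (g25Root (φ omega) j) (φ omega) * e6Roots.map φ : Matrix (Fin 3) (Fin 6) ℂ) =
      (e6Roots * ((g25Word j).map (simpleReflection (e6Cartan EisensteinInt))).prod).map φ := by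
  refine Matrix.ext_of_mulVec_single fun k ↦ ?_
  rw [← mulVec_mulVec, mulVec_single_one, mulVec_single_one, ← map_g25Root]
  exact reflMat_map_mulVec φ (g25Root_dotProduct_star_ne_zero j) (g25Root_smul_e6Roots_mul_word j k)

theorem exists_mul_eq_of_mem_g25 (hc : c ≠ 0)
    (hgram : (rootMatrix a)ᴴ * rootMatrix a = c • (e6Cartan EisensteinInt).map φ)
    {M' : Matrix (Fin 3) (Fin 3) ℂ} (hM' : M' ∈ g25 (φ omega)) :
    ∃ M ∈ reflMonoid a (-1), rootMap φ a e6Roots * M = M' * rootMap φ a e6Roots := by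
  induction hM' using Submonoid.closure_induction with
  | mem M' hM' =>
    obtain ⟨j, rfl⟩ := hM'
    refine ⟨_, prod_reflMat_mem_reflMonoid (g25Word j), ?_⟩
    rw [rootMap_mul (isUnit_det_rootMatrix hc hgram)
      (prod_reflMat_mul_rootMatrix hc hgram e6Cartan_diag _), rootMap, rootMap, ← Matrix.mul_assoc,
      reflMat_mul_map_e6Roots]
  | one => exact ⟨1, one_mem _, by rw [Matrix.mul_one, Matrix.one_mul]⟩
  | mul M₁' M₂' _ _ ih₁ ih₂ =>
    obtain ⟨M₁, hM₁, h₁⟩ := ih₁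
    obtain ⟨M₂, hM₂, h₂⟩ := ih₂
    exact ⟨M₁ * M₂, mul_mem hM₁ hM₂, by
      rw [← Matrix.mul_assoc, h₁, Matrix.mul_assoc, h₂, Matrix.mul_assoc]⟩

theorem e6Roots_mulVec_mem_rootLattice (t : Fin 6 → EisensteinInt) :
    e6Roots *ᵥ t ∈ rootLattice := by
  rw [mulVec_eq_sum]
  refine sum_mem fun k _ ↦ ?_
  rw [op_smul_eq_smul]
  exact Submodule.smul_mem _ (t k) (e6Roots_col_mem_rootLattice k)

theorem exists_three_smul_eq_of_mem_weightLattice {y : Fin 3 → EisensteinInt}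
    (hy : y ∈ weightLattice) :
    ∃ t, e6Rootsᴴ *ᵥ y + (e6Roots.map star)ᴴ *ᵥ star y = (3 : EisensteinInt) • t := by
  have hdvd : ∀ k, 3 ∣ (e6Rootsᴴ *ᵥ y + (e6Roots.map star)ᴴ *ᵥ star y) k := fun k ↦ by
    convert three_dvd_add_star
      (theta_dvd_dotProduct_star (e6Roots_col_mem_rootLattice k) hy) using 1
    simp [mulVec, dotProduct, mul_comm]
  choose t ht using hdvd
  exact ⟨t, funext ht⟩

theorem map_comp_mulVec {m n : ℕ} (X : Matrix (Fin m) (Fin n) EisensteinInt)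
    (v : Fin n → EisensteinInt) : φ ∘ (X *ᵥ v) = X.map φ *ᵥ (φ ∘ v) :=
  funext (RingHom.map_mulVec φ X v)

section Restriction

variable {Z : Matrix (Fin 6) (Fin 6) EisensteinInt} {M : Matrix (Fin 3) (Fin 3) ℂ}

theorem sub_one_mul_map_e6Roots
    (h : (M - 1) * e6Roots.map φ = (e6Roots * Z * e6Cartan EisensteinInt).map φ)
    (Y : Matrix (Fin 3) (Fin 6) EisensteinInt) :
    (M - 1) * (e6Roots * e6CartanInv * Yᴴ).map φ = (3 : ℂ) • (e6Roots * Z * Yᴴ).map φ := by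
  rw [Matrix.mul_assoc e6Roots, Matrix.map_mul, ← Matrix.mul_assoc, h, ← Matrix.map_mul,
    Matrix.mul_assoc, ← Matrix.mul_assoc (e6Cartan _), e6Cartan_mul_e6CartanInv, Matrix.smul_mul,
    Matrix.one_mul, Matrix.mul_smul, map_ringHom_smul, map_ofNat]

theorem three_smul_sub_one_mulVec
    (h : (M - 1) * e6Roots.map φ = (e6Roots * Z * e6Cartan EisensteinInt).map φ)
    (y : Fin 3 → EisensteinInt) :
    (3 : ℂ) • ((M - 1) *ᵥ (φ ∘ y)) =
      φ ∘ ((e6Roots * Z) *ᵥ (e6Rootsᴴ *ᵥ y + (e6Roots.map star)ᴴ *ᵥ star y)) := by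
  have hB : (3 : ℂ) • (M - 1) = (e6Roots * Z * e6Rootsᴴ).map φ := by
    have h₉ := sub_one_mul_map_e6Roots h e6Roots
    rw [e6Roots_mul_e6CartanInv_mul_conjTranspose, map_ringHom_smul, map_ofNat,
      Matrix.map_one _ (map_zero φ) (map_one φ), Matrix.mul_smul, Matrix.mul_one,
      show (9 : ℂ) = 3 * 3 by norm_num, mul_smul] at h₉
    exact smul_right_injective _ (three_ne_zero (α := ℂ)) h₉
  have hBstar : e6Roots * Z * (e6Roots.map star)ᴴ = 0 := by
    have h₀ := sub_one_mul_map_e6Roots h (e6Roots.map star)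
    rw [e6Roots_mul_e6CartanInv_mul_conjTranspose_star, Matrix.map_zero _ (map_zero φ),
      Matrix.mul_zero, eq_comm] at h₀
    refine Matrix.map_injective (map_injective φ) ?_
    exact ((smul_eq_zero.1 h₀).resolve_left three_ne_zero).trans
      (Matrix.map_zero _ (map_zero φ)).symm
  rw [← smul_mulVec, hB, mulVec_add, mulVec_mulVec, mulVec_mulVec, hBstar, zero_mulVec, add_zero,
    map_comp_mulVec]

theorem mem_discriminantKernel_of_mul_map_e6Roots (hM : M ∈ unitaryGroup (Fin 3) ℂ)
    (h : (M - 1) * e6Roots.map φ = (e6Roots * Z * e6Cartan EisensteinInt).map φ) :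
    M ∈ discriminantKernel φ := by
  refine ⟨hM, fun y hy ↦ ?_⟩
  obtain ⟨t, ht⟩ := exists_three_smul_eq_of_mem_weightLattice hy
  refine ⟨e6Roots *ᵥ (Z *ᵥ t), e6Roots_mulVec_mem_rootLattice _, ?_⟩
  have hsub : (M - 1) *ᵥ (φ ∘ y) = φ ∘ (e6Roots *ᵥ (Z *ᵥ t)) := by
    refine smul_right_injective _ (three_ne_zero (α := ℂ)) ?_
    change (3 : ℂ) • _ = (3 : ℂ) • _
    rw [three_smul_sub_one_mulVec h, ht, mulVec_smul, mulVec_mulVec]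
    ext i
    simp [map_ofNat φ 3]
  rw [sub_mulVec, one_mulVec, sub_eq_iff_eq_add] at hsub
  rw [hsub]
  ext i
  simp [add_comm]

end Restriction

theorem mem_g25_iff (hc : c ≠ 0)
    (hgram : (rootMatrix a)ᴴ * rootMatrix a = c • (e6Cartan EisensteinInt).map φ)
    {M' : Matrix (Fin 3) (Fin 3) ℂ} : M' ∈ g25 (φ omega) ↔
      ∃ M ∈ reflMonoid a (-1), M * (rootMap φ a e6Roots)ᴴ = (rootMap φ a e6Roots)ᴴ * M' := by
  have hunitary : reflMonoid a (-1) ≤ unitaryGroup (Fin 6) ℂ :=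
    reflMonoid_le_unitaryGroup two_ne_zero (by norm_num)
  constructor
  · intro hM'
    obtain ⟨M, hM, h⟩ := exists_mul_eq_of_mem_g25 hc hgram hM'
    exact ⟨M, hM, mul_conjTranspose_eq_of_mul_eq (hunitary hM) (g25_le_unitaryGroup φ hM') h⟩
  · rintro ⟨M, hM, h⟩
    have hA := isUnit_det_rootMatrix hc hgram
    have hM' := mem_unitaryGroup_of_mul_conjTranspose_eq (div_ne_zero three_ne_zero hc)
      (rootMap_e6Roots_mul_conjTranspose hc hgram) (hunitary hM) h
    obtain ⟨Z, hZ⟩ := exists_mul_rootMatrix_eq hc hgram e6Cartan_diag hM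
    rw [g25_eq_discriminantKernel]
    refine mem_discriminantKernel_of_mul_map_e6Roots hM' (Z := Z) ?_
    rw [Matrix.sub_mul, Matrix.one_mul, ← rootMap_mul_rootMatrix hA, ← Matrix.mul_assoc,
      ← mul_eq_of_mul_conjTranspose_eq (hunitary hM) hM' h, rootMap_mul hA hZ,
      rootMap_mul_rootMatrix hA, Matrix.mul_add, Matrix.mul_one, Matrix.map_add φ (map_add φ),
      rootMap_mul_rootMatrix hA, add_sub_cancel_left, Matrix.mul_assoc]

/-- The product of the reflections of order `2` in the given simple roots, in order. -/
def coxeterElement {N n : ℕ} (a : Fin n → Fin N → ℂ) : Matrix (Fin N) (Fin N) ℂ :=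
  ((List.finRange n).map fun i ↦ reflMat (a i) (-1)).prod

theorem rootMap_mul_coxeterElement_pow (hc : c ≠ 0)
    (hgram : (rootMatrix a)ᴴ * rootMatrix a = c • (e6Cartan EisensteinInt).map φ) :
    rootMap φ a X * coxeterElement a ^ 4 = rootMap φ a (X * e6Coxeter ^ 4) := by
  have h (X : Matrix (Fin 3) (Fin 6) EisensteinInt) :
      rootMap φ a X * coxeterElement a = rootMap φ a (X * e6Coxeter) :=
    rootMap_mul (isUnit_det_rootMatrix hc hgram)
      (prod_reflMat_mul_rootMatrix hc hgram e6Cartan_diag _)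
  simp only [pow_succ, pow_zero, Matrix.one_mul, ← Matrix.mul_assoc, h]

theorem eigSpace_coxeterElement_pow (hc : c ≠ 0)
    (hgram : (rootMatrix a)ᴴ * rootMatrix a = c • (e6Cartan EisensteinInt).map φ) :
    eigSpace (coxeterElement a ^ 4) (φ omega) =
      LinearMap.range (rootMap φ a e6Roots)ᴴ.mulVecLin := by
  have homega : φ omega ≠ φ (omega ^ 2) := (EisensteinInt.map_injective φ).ne (by decide)
  refine eigSpace_eq_range_conjTranspose homega (div_ne_zero three_ne_zero hc) ?_ ?_
    (rootMap_resolution hc hgram) (rootMap_e6Roots_mul_conjTranspose hc hgram) ?_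
  · rw [rootMap_mul_coxeterElement_pow hc hgram, e6Roots_mul_e6Coxeter_pow, rootMap_smul]
  · rw [rootMap_mul_coxeterElement_pow hc hgram, e6Roots_star_mul_e6Coxeter_pow, rootMap_smul]
  · rw [← conjTranspose_conjTranspose (rootMap φ a (e6Roots.map star)), ← conjTranspose_mul,
      rootMap_mul_conjTranspose hc hgram, e6Roots_mul_e6CartanInv_mul_conjTranspose_star]
    simp

end E6

section SimpleRoots

theorem herm_e6SimpleRoots {a : Fin 6 → (Fin 6 → ℂ)}
    (ha0 : a 0 = ![0, 1, -1, 0, 1 / (Real.sqrt 2 : ℂ), (Real.sqrt (3 / 2) : ℂ)])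
    (ha1 : a 1 = ![0, 0, 1, -1, -(Real.sqrt 2 : ℂ), 0])
    (ha2 : a 2 = ![0, 0, 0, 2, 0, 0])
    (ha3 : a 3 = ![0, 0, 1, -1, (Real.sqrt 2 : ℂ), 0])
    (ha4 : a 4 = ![0, 1, -1, 0, -(1 / (Real.sqrt 2 : ℂ)), -(Real.sqrt (3 / 2) : ℂ)])
    (ha5 : a 5 = ![1, -1, -1, -1, 0, 0]) (i j : Fin 6) :
    herm (a i) (a j) = 2 * e6Cartan ℂ i j := by
  have hr : (√2 : ℂ) * (√2 : ℂ) = 2 := by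
    rw [← Complex.ofReal_mul, Real.mul_self_sqrt zero_le_two, Complex.ofReal_ofNat]
  have hs : (√(3 / 2) : ℂ) * (√(3 / 2) : ℂ) = 3 / 2 := by
    rw [← Complex.ofReal_mul, Real.mul_self_sqrt (by norm_num)]
    norm_num
  have hr_inv : 1 / (√2 : ℂ) = √2 / 2 := by
    have : (√2 : ℂ) ≠ 0 := by simp
    field_simp
    linear_combination -hr
  have hr_conj := Complex.conj_ofReal √2
  have hs_conj := Complex.conj_ofReal √(3 / 2)
  have hcartan : e6Cartan ℤ = !![2, -1, 0, 0, 0, 0; -1, 2, -1, 0, 0, 0; 0, -1, 2, -1, 0, -1;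
      0, 0, -1, 2, -1, 0; 0, 0, 0, -1, 2, 0; 0, 0, -1, 0, 0, 2] := by decide
  rw [hr_inv] at ha0 ha4
  rw [← map_e6Cartan (Int.castRingHom ℂ), hcartan]
  generalize (√2 : ℂ) = r at *
  generalize (√(3 / 2) : ℂ) = s at *
  fin_cases i <;> fin_cases j <;>
    simp [herm, ha0, ha1, ha2, ha3, ha4, ha5, Fin.sum_univ_succ, hr_conj, hs_conj] <;> grind

end SimpleRoots

theorem statement_13_general {ω : ℂ} (hω : IsPrimitiveRoot ω 3) {a : Fin 6 → Fin 6 → ℂ} {c : ℂ}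
    (hc : c ≠ 0) (hgram : ∀ i j, herm (a i) (a j) = c * e6Cartan ℂ i j)
    {E : Submodule ℂ (Fin 6 → ℂ)} (hE : E = eigSpace (coxeterElement a ^ 4) ω) :
    Module.finrank ℂ E = 3 ∧
    ∃ Φ : (Fin 3 → ℂ) →ₗ[ℂ] (Fin 6 → ℂ), Function.Injective Φ ∧
      LinearMap.range Φ = E ∧
      (g25 ω : Set (Matrix (Fin 3) (Fin 3) ℂ)) =
        {M' | ∃ M ∈ reflMonoid a (-1), (∀ v ∈ E, M.mulVec v ∈ E) ∧
          ∀ t : Fin 3 → ℂ, M.mulVec (Φ t) = Φ (M'.mulVec t)} := by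
  obtain ⟨φ, rfl⟩ := EisensteinInt.exists_ringHom_omega_eq hω
  have hG : (rootMatrix a)ᴴ * rootMatrix a = c • (e6Cartan EisensteinInt).map φ := by
    ext i j
    rw [conjTranspose_rootMatrix_mul_rootMatrix, hgram, map_e6Cartan, ← isSymm_e6Cartan.apply]
    rfl
  set P := rootMap φ a e6Roots
  have hrange : LinearMap.range Pᴴ.mulVecLin = E := hE ▸ (eigSpace_coxeterElement_pow hc hG).symm
  have hinj : Function.Injective Pᴴ.mulVecLin :=
    conjTranspose_mulVecLin_injective (div_ne_zero three_ne_zero hc)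
      (rootMap_e6Roots_mul_conjTranspose hc hG)
  have hfinrank : Module.finrank ℂ E = 3 := by
    rw [← hrange, LinearMap.finrank_range_of_inj hinj, Module.finrank_fin_fun]
  refine ⟨hfinrank, Pᴴ.mulVecLin, hinj, hrange, Set.ext fun M' ↦ ?_⟩
  rw [SetLike.mem_coe, mem_g25_iff hc hG]
  refine exists_congr fun M ↦ and_congr_right fun _ ↦ ?_
  rw [mul_conjTranspose_eq_iff, hrange]

/-- The `3`-reflection subquotient of `G₃₅ = E₆` is isomorphic to `G₂₅`:
with `ζ = e^{πi/6}`, `ω = e^{2πi/3}`, the Coxeter element `g` of `E₆`, and `E` the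
`ζ^4`-eigenspace of `g^4` (a `3`-dimensional subspace), there is a `ℂ`-linear
isomorphism `ψ : E ≅ ℂ^3` conjugating `π_E(N_E)` onto `G₂₅`. -/
theorem statement_13 (ζ ω : ℂ) (hζ : ζ = Complex.exp (Real.pi * Complex.I / 6))
    (hω : ω = Complex.exp (2 * Real.pi * Complex.I / 3))
    (a : Fin 6 → (Fin 6 → ℂ))
    (ha0 : a 0 = ![0, 1, -1, 0, 1 / (Real.sqrt 2 : ℂ), (Real.sqrt (3 / 2) : ℂ)])
    (ha1 : a 1 = ![0, 0, 1, -1, -(Real.sqrt 2 : ℂ), 0])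
    (ha2 : a 2 = ![0, 0, 0, 2, 0, 0])
    (ha3 : a 3 = ![0, 0, 1, -1, (Real.sqrt 2 : ℂ), 0])
    (ha4 : a 4 = ![0, 1, -1, 0, -(1 / (Real.sqrt 2 : ℂ)), -(Real.sqrt (3 / 2) : ℂ)])
    (ha5 : a 5 = ![1, -1, -1, -1, 0, 0])
    (G35 : Submonoid (Matrix (Fin 6) (Fin 6) ℂ))
    (hG35 : G35 = Submonoid.closure {M | ∃ i : Fin 6, M = reflMat (a i) (-1)})
    (g : Matrix (Fin 6) (Fin 6) ℂ)
    (hg : g = reflMat (a 0) (-1) * reflMat (a 1) (-1) * reflMat (a 2) (-1) *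
      reflMat (a 3) (-1) * reflMat (a 4) (-1) * reflMat (a 5) (-1))
    (E : Submodule ℂ (Fin 6 → ℂ)) (hE : E = eigSpace (g ^ 4) (ζ ^ 4))
    (β : Fin 3 → (Fin 3 → ℂ))
    (hβ0 : β 0 = ![0, 0, 1])
    (hβ1 : β 1 = ![ω, ω ^ 2, 1])
    (hβ2 : β 2 = ![1, 0, 0])
    (G25 : Submonoid (Matrix (Fin 3) (Fin 3) ℂ))
    (hG25 : G25 = Submonoid.closure {M | ∃ i : Fin 3, M = reflMat (β i) ω}) :
    Module.finrank ℂ E = 3 ∧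
    ∃ Φ : (Fin 3 → ℂ) →ₗ[ℂ] (Fin 6 → ℂ), Function.Injective Φ ∧
      LinearMap.range Φ = E ∧
      (G25 : Set (Matrix (Fin 3) (Fin 3) ℂ)) =
        {M' | ∃ M ∈ G35, (∀ v ∈ E, M.mulVec v ∈ E) ∧
          ∀ t : Fin 3 → ℂ, M.mulVec (Φ t) = Φ (M'.mulVec t)} := by
  have hωprim : IsPrimitiveRoot ω 3 := hω ▸ mod_cast Complex.isPrimitiveRoot_exp 3 three_ne_zero
  have hζω : ζ ^ 4 = ω := by
    rw [hζ, hω, ← Complex.exp_nat_mul]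
    congr 1
    push_cast
    ring
  have hβ : β = g25Root ω := by
    funext j
    fin_cases j <;> simp [hβ0, hβ1, hβ2, g25Root]
  have hcox : g = coxeterElement a := by
    simp [hg, coxeterElement, List.finRange_succ, mul_assoc]
  subst hG35 hG25 hβ
  exact statement_13_general hωprim two_ne_zero (herm_e6SimpleRoots ha0 ha1 ha2 ha3 ha4 ha5)
    (by rw [hE, hζω, hcox])

end
end Paper
end

section
/- Let ζ = e^{πi/6}, ω = e^{2πi/3}, let G_25 ⊂ GL_3(C) be generated by the three order-3 reflections s(α_1, ω), s(α_2, ω), s(α_3, ω) with roots α_1 = (0,0,1)^T, α_2 = (ω, ω^2, 1)^T, α_3 = (1,0,0)^T, and let g = s(α_1, ω)s(α_2, ω)s(α_3, ω). Let E be the ζ^2-eigenspace of g^2, a 2-dimensional subspace, N_E = {s ∈ G_25 : s(E) ⊆ E}, and π_E restriction to E. Then there exists a C-linear isomorphism ψ : E → C^2 such that ψ ∘ π_E(N_E) ∘ ψ^{−1} = G_5, where G_5 ⊂ GL_2(C) is generated by r_1 = (ω/2)·[[−1−i, 1−i], [−1−i, −1+i]] and r_2' = (ω/2)·[[−1+i,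 1−i], [−1−i, −1−i]]. In other words, the 6-reflection subquotient of G_25 is isomorphic to G_5. -/
/-!
The Heisenberg group `K`, generated by the shift `X`, the clock `Z = diag(1, ω, ω²)` and the scalar
`ω`, is normalised by the three reflections of `G₂₅`. The plane `E` is `{v | v 0 = v 2}`; let `H` be
the group generated by `a = s(α₃, ω)² s(α₁, ω)²` and `b = s(α₁, ω) s(α₂, ω)² s(α₁, ω)²`, which
preserve `E` and act on it, in a suitable basis, as the two generators of `G₅`. Each reflection lies
in `K H`, hence `G₂₅ = K H`. An element of `K` that preserves `E` is a power of the scalar `ω`, and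
`ω = (a b)⁸` lies in `H`; so the stabiliser of `E` in `G₂₅` is exactly `H`.
-/

open Matrix MvPolynomial

namespace Paper

noncomputable section

section Monoid

variable {M : Type*} [Monoid M]

lemma exists_semiconjBy_of_mem_closure {T : Set M} {K : Submonoid M} {s x : M}
    (hT : ∀ t ∈ T, ∃ k ∈ K, SemiconjBy s t k) (hx : x ∈ Submonoid.closure T) :
    ∃ k ∈ K, SemiconjBy s x k := by
  induction hx using Submonoid.closure_induction with
  | mem t ht => exact hT t ht
  | one => exact ⟨1, one_mem K, SemiconjBy.one_right s⟩
  | mul x y _ _ hx hy =>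
    obtain ⟨k, hk, hxk⟩ := hx
    obtain ⟨l, hl, hyl⟩ := hy
    exact ⟨k * l, mul_mem hk hl, hxk.mul_right hyl⟩

lemma exists_eq_mul_of_mem_closure {S : Set M} {K H : Submonoid M} {g : M}
    (hnorm : ∀ s ∈ S, ∀ k ∈ K, ∃ l ∈ K, SemiconjBy s k l)
    (hS : ∀ s ∈ S, ∃ k ∈ K, ∃ h ∈ H, s = k * h) (hg : g ∈ Submonoid.closure S) :
    ∃ k ∈ K, ∃ h ∈ H, g = k * h := by
  induction hg using Submonoid.closure_induction_left with
  | one => exact ⟨1, one_mem K, 1, one_mem H, (mul_one 1).symm⟩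
  | mul_left s hs g _ ih =>
    obtain ⟨k, hk, h, hh, rfl⟩ := ih
    obtain ⟨l, hl, hkl⟩ := hnorm s hs k hk
    obtain ⟨k', hk', h', hh', hs'⟩ := hS s hs
    refine ⟨l * k', mul_mem hl hk', h' * h, mul_mem hh' hh, ?_⟩
    rw [← mul_assoc, hkl.eq, hs']
    simp only [mul_assoc]

lemma exists_eq_pow_mul_pow_mul_pow_of_mem_closure {x y z g : M} (hzx : Commute z x)
    (hzy : Commute z y) (hyx : y * x = z * x * y) (hg : g ∈ Submonoid.closure {x, y, z}) :
    ∃ l i j : ℕ, g = z ^ l * (x ^ i * y ^ j) := by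
  induction hg using Submonoid.closure_induction_left with
  | one => exact ⟨0, 0, 0, by simp only [pow_zero, mul_one]⟩
  | mul_left s hs g _ ih =>
    obtain ⟨l, i, j, rfl⟩ := ih
    rcases hs with rfl | rfl | rfl
    · refine ⟨l, i + 1, j, ?_⟩
      rw [← mul_assoc, ← (hzx.pow_left l).eq, mul_assoc, ← mul_assoc s, ← pow_succ']
    · have hpow : s * x ^ i = z ^ i * x ^ i * s := by
        rw [← hzx.mul_pow]
        exact SemiconjBy.pow_right hyx i
      refine ⟨l + i, i, j + 1, ?_⟩
      rw [← mul_assoc, ← (hzy.pow_left l).eq, mul_assoc, ← mul_assoc s, hpow, pow_add, pow_succ']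
      simp only [mul_assoc]
    · exact ⟨l + 1, i, j, by rw [← mul_assoc, ← pow_succ']⟩

end Monoid

section Intertwiner

variable {m n R : Type*} [Fintype m] [Fintype n] [Semiring R] {B : Matrix m n R}

lemma forall_mulVec_mulVec_eq_iff {M : Matrix m m R} {N : Matrix n n R} :
    (∀ t, M *ᵥ (B *ᵥ t) = B *ᵥ (N *ᵥ t)) ↔ M * B = B * N := by
  simp only [Matrix.mulVec_mulVec, ← funext_iff, Matrix.mulVec_injective.eq_iff]

variable [DecidableEq m] [DecidableEq n]

/-- The pairs `(M, N)` of square matrices intertwined by the rectangular matrix `B`; when `B` is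
injective this says that `M` preserves the range of `B` and acts on it, in the coordinates given by
`B`, as `N`. -/
def intertwinedPairs (B : Matrix m n R) : Submonoid (Matrix m m R × Matrix n n R) where
  carrier := {p | p.1 * B = B * p.2}
  one_mem' := (Matrix.one_mul B).trans (Matrix.mul_one B).symm
  mul_mem' {p q} hp hq := by
    change p.1 * q.1 * B = B * (p.2 * q.2)
    rw [Matrix.mul_assoc, hq, ← Matrix.mul_assoc, hp, Matrix.mul_assoc]

variable {T : Set (Matrix m m R × Matrix n n R)}

lemma exists_mul_eq_mul_of_mem_closure_fst (hT : T ⊆ intertwinedPairs B) {M : Matrix m m R}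
    (hM : M ∈ Submonoid.closure (Prod.fst '' T)) :
    ∃ N ∈ Submonoid.closure (Prod.snd '' T), M * B = B * N := by
  rw [← MonoidHom.coe_fst, ← MonoidHom.map_mclosure] at hM
  obtain ⟨p, hp, rfl⟩ := hM
  refine ⟨p.2, ?_, Submonoid.closure_le.mpr hT hp⟩
  rw [← MonoidHom.coe_snd, ← MonoidHom.map_mclosure]
  exact Submonoid.mem_map_of_mem _ hp

lemma exists_mul_eq_mul_of_mem_closure_snd (hT : T ⊆ intertwinedPairs B) {N : Matrix n n R}
    (hN : N ∈ Submonoid.closure (Prod.snd '' T)) :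
    ∃ M ∈ Submonoid.closure (Prod.fst '' T), M * B = B * N := by
  rw [← MonoidHom.coe_snd, ← MonoidHom.map_mclosure] at hN
  obtain ⟨p, hp, rfl⟩ := hN
  refine ⟨p.1, ?_, Submonoid.closure_le.mpr hT hp⟩
  rw [← MonoidHom.coe_fst, ← MonoidHom.map_mclosure]
  exact Submonoid.mem_map_of_mem _ hp

end Intertwiner

/-- The cyclic shift `X : e_i ↦ e_{i+1}` of `ℂ³`. -/
def shift : Matrix (Fin 3) (Fin 3) ℂ := !![0, 0, 1; 1, 0, 0; 0, 1, 0]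

/-- The clock matrix `Z : e_i ↦ ω ^ i e_i` of `ℂ³`. -/
def clock (ω : ℂ) : Matrix (Fin 3) (Fin 3) ℂ := diagonal ![1, ω, ω ^ 2]

/-- The Heisenberg group of order `27`, as a group of matrices (all of finite order, so that the
submonoid they generate is a group). -/
def heisenberg (ω : ℂ) : Submonoid (Matrix (Fin 3) (Fin 3) ℂ) :=
  Submonoid.closure {shift, clock ω, ω • 1}

/-- The matrix of the inclusion of the plane `{v | v 0 = v 2}` in the basis `e_0 + e_2, e_1`. -/
def planeInclusion : Matrix (Fin 3) (Fin 2) ℂ := !![1, 0; 0, 1; 1, 0]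

/-- The roots `α_1, α_2, α_3` of `G₂₅`, numbered from `0`. -/
def root (ω : ℂ) : Fin 3 → Fin 3 → ℂ := ![![0, 0, 1], ![ω, ω ^ 2, 1], ![1, 0, 0]]

/-- The generating reflections `s(α_i, ω)` of `G₂₅`. -/
def refl (ω : ℂ) (i : Fin 3) : Matrix (Fin 3) (Fin 3) ℂ := reflMat (root ω i) ω

/-- The reflection group `G₂₅`. -/
def shephardTodd25 (ω : ℂ) : Submonoid (Matrix (Fin 3) (Fin 3) ℂ) :=
  Submonoid.closure (Set.range (refl ω))

/-- The generator `r_1` of `G₅`. -/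
def gen₁ (ω : ℂ) : Matrix (Fin 2) (Fin 2) ℂ :=
  (ω / 2) • !![-1 - Complex.I, 1 - Complex.I; -1 - Complex.I, -1 + Complex.I]

/-- The generator `r_2'` of `G₅`. -/
def gen₂ (ω : ℂ) : Matrix (Fin 2) (Fin 2) ℂ :=
  (ω / 2) • !![-1 + Complex.I, 1 - Complex.I; -1 - Complex.I, -1 - Complex.I]

/-- The reflection group `G₅`. -/
def shephardTodd5 (ω : ℂ) : Submonoid (Matrix (Fin 2) (Fin 2) ℂ) :=
  Submonoid.closure {gen₁ ω, gen₂ ω}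

/-- The element of `G₂₅` that acts on the plane `E` as the generator `r_1` of `G₅`. -/
def lift₁ (ω : ℂ) : Matrix (Fin 3) (Fin 3) ℂ := refl ω 2 ^ 2 * refl ω 0 ^ 2

/-- The element of `G₂₅` that acts on the plane `E` as the generator `r_2'` of `G₅`. -/
def lift₂ (ω : ℂ) : Matrix (Fin 3) (Fin 3) ℂ := refl ω 0 * refl ω 1 ^ 2 * refl ω 0 ^ 2

/-- The stabiliser `N_E` of the plane `E` in `G₂₅`, given by generators. -/
def planeStabilizer (ω : ℂ) : Submonoid (Matrix (Fin 3) (Fin 3) ℂ) :=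
  Submonoid.closure {lift₁ ω, lift₂ ω}

/-- The change of basis of `E` that turns the action of `N_E` into `G₅`: its rows are left
eigenvectors of `r_1` for the eigenvalues `ω²` and `1`, scaled so as to match `r_2'` as well. -/
def planeBasisChange (ω : ℂ) : Matrix (Fin 2) (Fin 2) ℂ :=
  !![1, ω ^ 2 + Complex.I * ω;
    (1 + Complex.I) * (Complex.I - ω ^ 2), (1 + Complex.I) * ω]

/-- The matrix of the embedding `ψ⁻¹ : ℂ² → ℂ³` with range `E`. -/
def planeEmbedding (ω : ℂ) : Matrix (Fin 3) (Fin 2) ℂ := planeInclusion * planeBasisChange ω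

/-- The permutation matrix exchanging `e_0` and `e_2`, whose fixed space is `E`. -/
def swap : Matrix (Fin 3) (Fin 3) ℂ := !![0, 0, 1; 0, 1, 0; 1, 0, 0]

section ReflectionGroups

variable {ω : ℂ}

lemma sq_add_self_add_one_eq_zero (hω : IsPrimitiveRoot ω 3) : ω ^ 2 + ω + 1 = 0 := by
  have h := hω.geom_sum_eq_zero (by norm_num)
  simp only [Finset.sum_range_succ, Finset.sum_range_zero] at h
  linear_combination h

lemma conj_eq_sq (hω : IsPrimitiveRoot ω 3) : (starRingEnd ℂ) ω = ω ^ 2 := by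
  rw [← Complex.inv_eq_conj (hω.norm'_eq_one (by norm_num))]
  exact inv_eq_of_mul_eq_one_right (by rw [← pow_succ', hω.pow_eq_one])

lemma shift_pow_three : shift ^ 3 = 1 := by
  ext i j
  fin_cases i <;> fin_cases j <;> simp [shift, pow_succ, Matrix.mul_apply, Fin.sum_univ_three]

lemma clock_pow (j : ℕ) : clock ω ^ j = diagonal ![1, ω ^ j, (ω ^ j) ^ 2] := by
  rw [clock, diagonal_pow]
  congr 1
  ext i
  fin_cases i <;> simp [pow_right_comm]

lemma clock_mul_shift (hω : IsPrimitiveRoot ω 3) :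
    clock ω * shift = (ω • 1 : Matrix _ _ ℂ) * shift * clock ω := by
  have h := hω.pow_eq_one
  ext i j
  fin_cases i <;> fin_cases j <;>
    simp [shift, clock, Matrix.mul_apply, diagonal_apply] <;> grind

lemma shift_pow_mul_clock_pow_eq_one (hω : IsPrimitiveRoot ω 3) {i j : ℕ}
    (hrow : ∀ c, (shift ^ i * clock ω ^ j * planeInclusion) 0 c =
      (shift ^ i * clock ω ^ j * planeInclusion) 2 c) :
    shift ^ i * clock ω ^ j = 1 := by
  rw [pow_eq_pow_mod i shift_pow_three] at hrow ⊢
  have hj : ω ^ j ≠ 0 := pow_ne_zero j (hω.ne_zero (by norm_num))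
  have hj3 : (ω ^ j) ^ 3 = 1 := by rw [pow_right_comm, hω.pow_eq_one, one_pow]
  have h0 := hrow 0
  have h1 := hrow 1
  have hi : i % 3 < 3 := Nat.mod_lt i (by norm_num)
  interval_cases i % 3
  · have hj2 : 1 = (ω ^ j) ^ 2 := by
      simpa [clock_pow, planeInclusion, Matrix.mul_apply, Fin.sum_univ_three, vecMul_diagonal]
        using h0
    have hj1 : ω ^ j = 1 := by linear_combination hj3 + ω ^ j * hj2
    rw [clock_pow, hj1, pow_zero, one_mul, one_pow, ← diagonal_one]
    congr 1
    ext i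
    fin_cases i <;> rfl
  · exact absurd h1 (by
      simpa [clock_pow, shift, planeInclusion, Matrix.mul_apply, Fin.sum_univ_three,
        vecMul_diagonal, eq_comm] using hj)
  · exact absurd h1 (by
      simpa [clock_pow, shift, pow_two, planeInclusion, Matrix.mul_apply, Fin.sum_univ_three,
        vecMul_diagonal] using hj)

lemma commute_smul_one (M : Matrix (Fin 3) (Fin 3) ℂ) : Commute (ω • 1) M :=
  (Commute.one_left M).smul_left ω

lemma mem_powers_of_mul_planeInclusion_eq (hω : IsPrimitiveRoot ω 3)
    {k : Matrix (Fin 3) (Fin 3) ℂ} (hk : k ∈ heisenberg ω) {N : Matrix (Fin 2) (Fin 2) ℂ}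
    (hN : k * planeInclusion = planeInclusion * N) :
    k ∈ Submonoid.powers (ω • (1 : Matrix (Fin 3) (Fin 3) ℂ)) := by
  obtain ⟨l, i, j, rfl⟩ := exists_eq_pow_mul_pow_mul_pow_of_mem_closure (commute_smul_one _)
    (commute_smul_one _) (clock_mul_shift hω) hk
  have hrow (c : Fin 2) : (shift ^ i * clock ω ^ j * planeInclusion) 0 c =
      (shift ^ i * clock ω ^ j * planeInclusion) 2 c := by
    have h : (planeInclusion * N) 0 c = (planeInclusion * N) 2 c := by
      simp [planeInclusion, Matrix.mul_apply]
    rw [← hN] at h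
    simpa [smul_pow, hω.ne_zero] using h
  exact ⟨l, by rw [shift_pow_mul_clock_pow_eq_one hω hrow, mul_one]⟩

lemma refl_zero : refl ω 0 = diagonal ![1, 1, ω] := by
  ext i j
  fin_cases i <;> fin_cases j <;> simp [refl, root, reflMat, herm, Fin.sum_univ_three]

lemma refl_two : refl ω 2 = diagonal ![ω, 1, 1] := by
  ext i j
  fin_cases i <;> fin_cases j <;> simp [refl, root, reflMat, herm, Fin.sum_univ_three]

lemma refl_one (hω : IsPrimitiveRoot ω 3) :
    refl ω 1 = (1 / 3 : ℂ) • !![2 + ω, 2 + ω, -1 - 2 * ω;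
      -1 - 2 * ω, 2 + ω, 2 + ω;
      2 + ω, -1 - 2 * ω, 2 + ω] := by
  have h := sq_add_self_add_one_eq_zero hω
  have hherm : herm (root ω 1) (root ω 1) = 3 := by
    simp only [herm, root, Fin.sum_univ_three, conj_eq_sq hω, cons_val, map_pow, map_one]
    linear_combination (ω ^ 3 + 2) * hω.pow_eq_one
  ext i j
  fin_cases i <;> fin_cases j <;>
    simp [refl, reflMat, hherm, -one_div] <;> simp [root, conj_eq_sq hω] <;> grind

lemma refl_one_sq (hω : IsPrimitiveRoot ω 3) :
    refl ω 1 ^ 2 = (1 / 3 : ℂ) • !![1 - ω, 1 + 2 * ω, 1 - ω;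
      1 - ω, 1 - ω, 1 + 2 * ω;
      1 + 2 * ω, 1 - ω, 1 - ω] := by
  have h := sq_add_self_add_one_eq_zero hω
  rw [refl_one hω, pow_two]
  ext i j
  fin_cases i <;> fin_cases j <;> simp [Matrix.mul_apply, Fin.sum_univ_three] <;> grind

lemma lift₁_eq : lift₁ ω = diagonal ![ω ^ 2, 1, ω ^ 2] := by
  rw [lift₁, refl_zero, refl_two, diagonal_pow, diagonal_pow, diagonal_mul_diagonal]
  congr 1
  ext i
  fin_cases i <;> simp

lemma lift₂_eq (hω : IsPrimitiveRoot ω 3) :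
    lift₂ ω = (1 / 3 : ℂ) • !![1 - ω, 1 + 2 * ω, -2 - ω;
      1 - ω, 1 - ω, 1 - ω;
      -2 - ω, 1 + 2 * ω, 1 - ω] := by
  have h := sq_add_self_add_one_eq_zero hω
  rw [lift₂, refl_one_sq hω, refl_zero, diagonal_pow]
  ext i j
  fin_cases i <;> fin_cases j <;> simp <;> grind

lemma lift₁_mul_lift₂_sq (hω : IsPrimitiveRoot ω 3) : (lift₁ ω * lift₂ ω) ^ 2 = -ω • swap := by
  have h := sq_add_self_add_one_eq_zero hω
  rw [lift₁_eq, lift₂_eq hω, pow_two]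
  ext i j
  fin_cases i <;> fin_cases j <;> simp [swap, Matrix.mul_apply, Fin.sum_univ_three] <;> grind

lemma swap_mul_swap : swap * swap = 1 := by
  ext i j
  fin_cases i <;> fin_cases j <;> simp [swap, Matrix.mul_apply, Fin.sum_univ_three]

lemma lift₁_mul_lift₂_pow_eight (hω : IsPrimitiveRoot ω 3) :
    (lift₁ ω * lift₂ ω) ^ 8 = ω • 1 := by
  rw [pow_mul _ 2 4, lift₁_mul_lift₂_sq hω, smul_pow, pow_mul swap 2 2, pow_two swap,
    swap_mul_swap, one_pow]
  congr 1
  linear_combination ω * hω.pow_eq_one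

lemma refl_zero_eq_heisenberg_mul (hω : IsPrimitiveRoot ω 3) :
    refl ω 0 = (ω • 1 : Matrix _ _ ℂ) * clock ω ^ 2 * lift₁ ω := by
  have h := hω.pow_eq_one
  rw [refl_zero, clock_pow, lift₁_eq]
  ext i j
  fin_cases i <;> fin_cases j <;> simp <;> grind

lemma refl_one_eq_heisenberg_mul (hω : IsPrimitiveRoot ω 3) :
    refl ω 1 = shift * (lift₂ ω * lift₁ ω ^ 2 * (lift₁ ω * lift₂ ω) ^ 2) := by
  have h := sq_add_self_add_one_eq_zero hω
  have hsq : lift₁ ω ^ 2 = !![ω, 0, 0; 0, 1, 0; 0, 0, ω] := by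
    rw [lift₁_eq, diagonal_pow]
    ext i j
    fin_cases i <;> fin_cases j <;> simp <;> grind
  rw [lift₁_mul_lift₂_sq hω, refl_one hω, hsq, lift₂_eq hω]
  ext i j
  fin_cases i <;> fin_cases j <;> simp [shift, swap] <;> grind

lemma refl_two_eq_heisenberg_mul (hω : IsPrimitiveRoot ω 3) :
    refl ω 2 = (ω • 1 : Matrix _ _ ℂ) ^ 2 * clock ω * lift₁ ω := by
  have h := hω.pow_eq_one
  rw [refl_two, clock, lift₁_eq]
  ext i j
  fin_cases i <;> fin_cases j <;> simp [pow_two] <;> grind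

lemma semiconjBy_refl_zero_shift (hω : IsPrimitiveRoot ω 3) :
    SemiconjBy (refl ω 0) shift (shift * clock ω) := by
  rw [SemiconjBy, refl_zero]
  ext i j
  fin_cases i <;> fin_cases j <;>
    simp [shift, clock, Matrix.mul_apply, Fin.sum_univ_three, vecMul_diagonal, ← pow_succ,
      hω.pow_eq_one]

lemma semiconjBy_refl_one_shift (hω : IsPrimitiveRoot ω 3) :
    SemiconjBy (refl ω 1) shift shift := by
  rw [SemiconjBy, refl_one hω]
  ext i j
  fin_cases i <;> fin_cases j <;> simp [shift, Matrix.mul_apply, Fin.sum_univ_three]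

lemma semiconjBy_refl_one_clock (hω : IsPrimitiveRoot ω 3) :
    SemiconjBy (refl ω 1) (clock ω) (shift ^ 2 * clock ω) := by
  have h := sq_add_self_add_one_eq_zero hω
  rw [SemiconjBy, refl_one hω, pow_two]
  ext i j
  fin_cases i <;> fin_cases j <;>
    simp [shift, clock, Matrix.mul_apply, Fin.sum_univ_three, vecMul_diagonal] <;> grind

lemma semiconjBy_refl_two_shift (hω : IsPrimitiveRoot ω 3) :
    SemiconjBy (refl ω 2) shift ((ω • 1 : Matrix _ _ ℂ) ^ 2 * (shift * clock ω)) := by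
  have h := hω.pow_eq_one
  rw [SemiconjBy, refl_two, smul_pow, one_pow]
  ext i j
  fin_cases i <;> fin_cases j <;>
    simp [shift, clock, Matrix.mul_apply, Fin.sum_univ_three, vecMul_diagonal] <;> grind

lemma shift_mem_heisenberg : shift ∈ heisenberg ω := Submonoid.subset_closure (by simp)

lemma clock_mem_heisenberg : clock ω ∈ heisenberg ω := Submonoid.subset_closure (by simp)

lemma smul_one_mem_heisenberg : ω • 1 ∈ heisenberg ω := Submonoid.subset_closure (by simp)

lemma exists_semiconjBy_refl (hω : IsPrimitiveRoot ω 3) (i : Fin 3)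
    {k : Matrix (Fin 3) (Fin 3) ℂ} (hk : k ∈ heisenberg ω) :
    ∃ l ∈ heisenberg ω, SemiconjBy (refl ω i) k l := by
  have hX : shift ∈ heisenberg ω := shift_mem_heisenberg
  have hZ : clock ω ∈ heisenberg ω := clock_mem_heisenberg
  have hc : ω • 1 ∈ heisenberg ω := smul_one_mem_heisenberg
  refine exists_semiconjBy_of_mem_closure ?_ hk
  rintro t (rfl | rfl | rfl)
  · fin_cases i
    · exact ⟨_, mul_mem hX hZ, semiconjBy_refl_zero_shift hω⟩
    · exact ⟨_, hX, semiconjBy_refl_one_shift hω⟩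
    · exact ⟨_, mul_mem (pow_mem hc 2) (mul_mem hX hZ), semiconjBy_refl_two_shift hω⟩
  · fin_cases i
    · exact ⟨_, hZ, refl_zero ▸ commute_diagonal _ _⟩
    · exact ⟨_, mul_mem (pow_mem hX 2) hZ, semiconjBy_refl_one_clock hω⟩
    · exact ⟨_, hZ, refl_two ▸ commute_diagonal _ _⟩
  · exact ⟨_, hc, (commute_smul_one (refl ω i)).symm⟩

lemma lift₁_mem_planeStabilizer : lift₁ ω ∈ planeStabilizer ω := Submonoid.subset_closure (by simp)

lemma lift₂_mem_planeStabilizer : lift₂ ω ∈ planeStabilizer ω := Submonoid.subset_closure (by simp)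

lemma exists_refl_eq_mul (hω : IsPrimitiveRoot ω 3) (i : Fin 3) :
    ∃ k ∈ heisenberg ω, ∃ h ∈ planeStabilizer ω, refl ω i = k * h := by
  have hX : shift ∈ heisenberg ω := shift_mem_heisenberg
  have hZ : clock ω ∈ heisenberg ω := clock_mem_heisenberg
  have hc : ω • 1 ∈ heisenberg ω := smul_one_mem_heisenberg
  have h₁ : lift₁ ω ∈ planeStabilizer ω := lift₁_mem_planeStabilizer
  have h₂ : lift₂ ω ∈ planeStabilizer ω := lift₂_mem_planeStabilizer
  fin_cases i
  · exact ⟨_, mul_mem hc (pow_mem hZ 2), _, h₁, refl_zero_eq_heisenberg_mul hω⟩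
  · exact ⟨_, hX, _, mul_mem (mul_mem h₂ (pow_mem h₁ 2)) (pow_mem (mul_mem h₁ h₂) 2),
      refl_one_eq_heisenberg_mul hω⟩
  · exact ⟨_, mul_mem (pow_mem hc 2) hZ, _, h₁, refl_two_eq_heisenberg_mul hω⟩

lemma exists_eq_mul_of_mem_shephardTodd25 (hω : IsPrimitiveRoot ω 3)
    {M : Matrix (Fin 3) (Fin 3) ℂ} (hM : M ∈ shephardTodd25 ω) :
    ∃ k ∈ heisenberg ω, ∃ h ∈ planeStabilizer ω, M = k * h :=
  exists_eq_mul_of_mem_closure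
    (Set.forall_mem_range.mpr fun i _ hk => exists_semiconjBy_refl hω i hk)
    (Set.forall_mem_range.mpr (exists_refl_eq_mul hω)) hM

lemma planeStabilizer_le_shephardTodd25 : planeStabilizer ω ≤ shephardTodd25 ω := by
  have hrefl (i : Fin 3) : refl ω i ∈ shephardTodd25 ω :=
    Submonoid.subset_closure (Set.mem_range_self i)
  rw [planeStabilizer, Submonoid.closure_le, Set.pair_subset_iff]
  exact ⟨mul_mem (pow_mem (hrefl 2) 2) (pow_mem (hrefl 0) 2),
    mul_mem (mul_mem (hrefl 0) (pow_mem (hrefl 1) 2)) (pow_mem (hrefl 0) 2)⟩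

lemma lift₁_mul_planeEmbedding (hω : IsPrimitiveRoot ω 3) :
    lift₁ ω * planeEmbedding ω = planeEmbedding ω * gen₁ ω := by
  have h := sq_add_self_add_one_eq_zero hω
  have hI := Complex.I_sq
  rw [lift₁_eq, planeEmbedding, planeInclusion, planeBasisChange, gen₁]
  ext i j
  fin_cases i <;> fin_cases j <;> simp [diagonal_mul] <;> grind

lemma lift₂_mul_planeEmbedding (hω : IsPrimitiveRoot ω 3) :
    lift₂ ω * planeEmbedding ω = planeEmbedding ω * gen₂ ω := by
  have h := sq_add_self_add_one_eq_zero hω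
  have hI := Complex.I_sq
  rw [lift₂_eq hω, planeEmbedding, planeInclusion, planeBasisChange, gen₂]
  ext i j
  fin_cases i <;> fin_cases j <;> simp <;> grind

lemma lift_gen_subset_intertwinedPairs (hω : IsPrimitiveRoot ω 3) :
    {(lift₁ ω, gen₁ ω), (lift₂ ω, gen₂ ω)} ⊆
      (intertwinedPairs (planeEmbedding ω) : Set (Matrix _ _ ℂ × Matrix _ _ ℂ)) :=
  Set.pair_subset (lift₁_mul_planeEmbedding hω) (lift₂_mul_planeEmbedding hω)

lemma exists_mem_shephardTodd5_mul_eq (hω : IsPrimitiveRoot ω 3) {h : Matrix (Fin 3) (Fin 3) ℂ}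
    (hh : h ∈ planeStabilizer ω) :
    ∃ N ∈ shephardTodd5 ω, h * planeEmbedding ω = planeEmbedding ω * N := by
  have hlift := exists_mul_eq_mul_of_mem_closure_fst (M := h)
    (lift_gen_subset_intertwinedPairs hω)
  simp only [Set.image_pair] at hlift
  exact hlift hh

lemma exists_mem_planeStabilizer_mul_eq (hω : IsPrimitiveRoot ω 3) {N : Matrix (Fin 2) (Fin 2) ℂ}
    (hN : N ∈ shephardTodd5 ω) :
    ∃ h ∈ planeStabilizer ω, h * planeEmbedding ω = planeEmbedding ω * N := by
  have hlift := exists_mul_eq_mul_of_mem_closure_snd (N := N)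
    (lift_gen_subset_intertwinedPairs hω)
  simp only [Set.image_pair] at hlift
  exact hlift hN

lemma isUnit_of_mem_shephardTodd5 (hω : IsPrimitiveRoot ω 3) {N : Matrix (Fin 2) (Fin 2) ℂ}
    (hN : N ∈ shephardTodd5 ω) : IsUnit N := by
  have hI := Complex.I_sq
  have h0 : ω ^ 2 ≠ 0 := pow_ne_zero 2 (hω.ne_zero (by norm_num))
  have h₁ : (gen₁ ω).det = ω ^ 2 := by
    rw [gen₁, det_smul, det_fin_two_of, Fintype.card_fin]
    linear_combination -(ω ^ 2 / 2) * hI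
  have h₂ : (gen₂ ω).det = ω ^ 2 := by
    rw [gen₂, det_smul, det_fin_two_of, Fintype.card_fin]
    linear_combination -(ω ^ 2 / 2) * hI
  have hle : shephardTodd5 ω ≤ IsUnit.submonoid _ := by
    rw [shephardTodd5, Submonoid.closure_le, Set.pair_subset_iff]
    exact ⟨(isUnit_iff_isUnit_det _).mpr (h₁ ▸ h0.isUnit),
      (isUnit_iff_isUnit_det _).mpr (h₂ ▸ h0.isUnit)⟩
  exact hle hN

lemma isUnit_planeBasisChange (hω : IsPrimitiveRoot ω 3) : IsUnit (planeBasisChange ω) := by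
  have h := sq_add_self_add_one_eq_zero hω
  have hI := Complex.I_sq
  have h0 : ω ≠ 0 := hω.ne_zero (by norm_num)
  rw [isUnit_iff_isUnit_det, isUnit_iff_ne_zero, planeBasisChange, det_fin_two_of]
  grind

lemma planeEmbedding_mulVec_injective (hω : IsPrimitiveRoot ω 3) :
    Function.Injective (planeEmbedding ω).mulVec := by
  have hincl : Function.Injective planeInclusion.mulVec := by
    intro s t hst
    ext i
    fin_cases i
    · simpa [planeInclusion, vecHead] using congrFun hst 0
    · simpa [planeInclusion, vecHead, vecTail] using congrFun hst 1
  intro s t hst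
  rw [planeEmbedding, ← mulVec_mulVec, ← mulVec_mulVec] at hst
  exact mulVec_injective_of_isUnit (isUnit_planeBasisChange hω) (hincl hst)

lemma mem_range_planeEmbedding_iff (hω : IsPrimitiveRoot ω 3) {v : Fin 3 → ℂ} :
    v ∈ LinearMap.range (planeEmbedding ω).mulVecLin ↔ v 0 = v 2 := by
  have hsurj : LinearMap.range (planeBasisChange ω).mulVecLin = ⊤ :=
    LinearMap.range_eq_top.mpr (mulVec_surjective_iff_isUnit.mpr (isUnit_planeBasisChange hω))
  rw [planeEmbedding, mulVecLin_mul, LinearMap.range_comp_of_range_eq_top _ hsurj]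
  constructor
  · rintro ⟨t, rfl⟩
    simp [planeInclusion]
  · intro hv
    refine ⟨![v 0, v 1], ?_⟩
    ext i
    fin_cases i <;> simp [planeInclusion, hv]

lemma coxeter_sq (hω : IsPrimitiveRoot ω 3) :
    (refl ω 0 * refl ω 1 * refl ω 2) ^ 2 = -ω ^ 2 • swap := by
  have h := sq_add_self_add_one_eq_zero hω
  have hcox : refl ω 0 * refl ω 1 * refl ω 2 = (1 / 3 : ℂ) • !![ω - 1, 2 + ω, -1 - 2 * ω;
      2 + ω, 2 + ω, 2 + ω;
      -1 - 2 * ω, 2 + ω, ω - 1] := by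
    rw [refl_zero, refl_one hω, refl_two]
    ext i j
    fin_cases i <;> fin_cases j <;> simp [diagonal_mul] <;> grind
  rw [hcox, pow_two]
  ext i j
  fin_cases i <;> fin_cases j <;> simp [swap] <;> grind

lemma eigSpace_coxeter_sq (hω : IsPrimitiveRoot ω 3) :
    eigSpace ((refl ω 0 * refl ω 1 * refl ω 2) ^ 2) (-ω ^ 2) =
      LinearMap.range (planeEmbedding ω).mulVecLin := by
  have h0 : -ω ^ 2 ≠ 0 := neg_ne_zero.mpr (pow_ne_zero 2 (hω.ne_zero (by norm_num)))
  ext v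
  rw [mem_range_planeEmbedding_iff hω, eigSpace, Module.End.mem_eigenspace_iff, coxeter_sq hω,
    mulVecLin_apply, smul_mulVec, (smul_right_injective _ h0).eq_iff]
  constructor
  · intro hv
    simpa [swap, vecHead, vecTail] using (congrFun hv 0).symm
  · intro hv
    ext i
    fin_cases i <;> simp [swap, vecHead, vecTail, hv]

lemma mem_planeStabilizer_of_mul_planeEmbedding_eq (hω : IsPrimitiveRoot ω 3)
    {M : Matrix (Fin 3) (Fin 3) ℂ} {N : Matrix (Fin 2) (Fin 2) ℂ} (hM : M ∈ shephardTodd25 ω)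
    (hMN : M * planeEmbedding ω = planeEmbedding ω * N) : M ∈ planeStabilizer ω := by
  obtain ⟨k, hk, h, hh, rfl⟩ := exists_eq_mul_of_mem_shephardTodd25 hω hM
  obtain ⟨N', hN', hhN'⟩ := exists_mem_shephardTodd5_mul_eq hω hh
  obtain ⟨P, hP⟩ := (isUnit_planeBasisChange hω).mul (isUnit_of_mem_shephardTodd5 hω hN')
  have hkP : k * planeInclusion * P.1 = planeInclusion * (planeBasisChange ω * N) := by
    rw [hP, ← Matrix.mul_assoc planeInclusion, ← planeEmbedding, ← hMN, Matrix.mul_assoc k h, hhN',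
      planeEmbedding]
    simp only [Matrix.mul_assoc]
  have hk' : k * planeInclusion = planeInclusion * (planeBasisChange ω * N * P⁻¹.1) := by
    rw [← Matrix.mul_assoc, ← hkP, Matrix.mul_assoc, P.mul_inv, Matrix.mul_one]
  obtain ⟨l, rfl⟩ := mem_powers_of_mul_planeInclusion_eq hω hk hk'
  refine mul_mem (pow_mem ?_ l) hh
  rw [← lift₁_mul_lift₂_pow_eight hω]
  exact pow_mem (mul_mem lift₁_mem_planeStabilizer lift₂_mem_planeStabilizer) 8

lemma mem_shephardTodd5_iff (hω : IsPrimitiveRoot ω 3) {N : Matrix (Fin 2) (Fin 2) ℂ} :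
    N ∈ shephardTodd5 ω ↔
      ∃ M ∈ shephardTodd25 ω, M * planeEmbedding ω = planeEmbedding ω * N := by
  constructor
  · intro hN
    obtain ⟨h, hh, hhN⟩ := exists_mem_planeStabilizer_mul_eq hω hN
    exact ⟨h, planeStabilizer_le_shephardTodd25 hh, hhN⟩
  · rintro ⟨M, hM, hMN⟩
    obtain ⟨N', hN', hMN'⟩ := exists_mem_shephardTodd5_mul_eq hω
      (mem_planeStabilizer_of_mul_planeEmbedding_eq hω hM hMN)
    suffices N = N' from this ▸ hN'
    refine mulVec_injective (funext fun t => planeEmbedding_mulVec_injective hω ?_)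
    simp only [mulVec_mulVec, ← hMN, hMN']

lemma exp_sq_eq_neg_exp_sq :
    Complex.exp (Real.pi * Complex.I / 6) ^ 2 =
      -Complex.exp (2 * Real.pi * Complex.I / 3) ^ 2 := by
  rw [← Complex.exp_nat_mul, ← Complex.exp_nat_mul, ← Complex.exp_antiperiodic.sub_eq]
  congr 1
  push_cast
  ring

end ReflectionGroups

/-- The `6`-reflection subquotient of `G₂₅` is isomorphic to `G₅`:
with `ζ = e^{πi/6}`, `ω = e^{2πi/3}`, `g` the product of the three generating order-3
reflections of `G₂₅`, and `E` the `ζ^2`-eigenspace of `g^2` (a `2`-dimensional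
subspace), there is a `ℂ`-linear isomorphism `ψ : E ≅ ℂ^2` conjugating `π_E(N_E)`
onto `G₅`. -/
theorem statement_16 (ζ ω : ℂ) (hζ : ζ = Complex.exp (Real.pi * Complex.I / 6))
    (hω : ω = Complex.exp (2 * Real.pi * Complex.I / 3))
    (a : Fin 3 → (Fin 3 → ℂ))
    (ha0 : a 0 = ![0, 0, 1])
    (ha1 : a 1 = ![ω, ω ^ 2, 1])
    (ha2 : a 2 = ![1, 0, 0])
    (G25 : Submonoid (Matrix (Fin 3) (Fin 3) ℂ))
    (hG25 : G25 = Submonoid.closure {M | ∃ i : Fin 3, M = reflMat (a i) ω})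
    (g : Matrix (Fin 3) (Fin 3) ℂ)
    (hg : g = reflMat (a 0) ω * reflMat (a 1) ω * reflMat (a 2) ω)
    (E : Submodule ℂ (Fin 3 → ℂ)) (hE : E = eigSpace (g ^ 2) (ζ ^ 2))
    (r₁ r₂' : Matrix (Fin 2) (Fin 2) ℂ)
    (hr₁ : r₁ = (ω / 2) • !![-1 - Complex.I, 1 - Complex.I;
      -1 - Complex.I, -1 + Complex.I])
    (hr₂' : r₂' = (ω / 2) • !![-1 + Complex.I, 1 - Complex.I;
      -1 - Complex.I, -1 - Complex.I])
    (G5 : Submonoid (Matrix (Fin 2) (Fin 2) ℂ))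
    (hG5 : G5 = Submonoid.closure {r₁, r₂'}) :
    Module.finrank ℂ E = 2 ∧
    ∃ Φ : (Fin 2 → ℂ) →ₗ[ℂ] (Fin 3 → ℂ), Function.Injective Φ ∧
      LinearMap.range Φ = E ∧
      (G5 : Set (Matrix (Fin 2) (Fin 2) ℂ)) =
        {M' | ∃ M ∈ G25, (∀ v ∈ E, M.mulVec v ∈ E) ∧
          ∀ t : Fin 2 → ℂ, M.mulVec (Φ t) = Φ (M'.mulVec t)} := by
  have hprim : IsPrimitiveRoot ω 3 := by
    simpa only [hω, Nat.cast_ofNat] using Complex.isPrimitiveRoot_exp 3 three_ne_zero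
  have hζω : ζ ^ 2 = -ω ^ 2 := by rw [hζ, hω, exp_sq_eq_neg_exp_sq]
  have ha : a = root ω := funext (Fin.forall_fin_succ.mpr ⟨ha0, Fin.forall_fin_two.mpr ⟨ha1, ha2⟩⟩)
  have hG25' : G25 = shephardTodd25 ω := by
    simp only [hG25, ha, shephardTodd25, Set.range, refl, eq_comm]
  have hG5' : G5 = shephardTodd5 ω := by rw [hG5, hr₁, hr₂', shephardTodd5, gen₁, gen₂]
  have hE' : LinearMap.range (planeEmbedding ω).mulVecLin = E := by
    rw [hE, hg, ha, hζω, ← eigSpace_coxeter_sq hprim]; rfl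
  have hinj : Function.Injective (planeEmbedding ω).mulVecLin :=
    planeEmbedding_mulVec_injective hprim
  refine ⟨?_, (planeEmbedding ω).mulVecLin, hinj, hE', ?_⟩
  · rw [← hE', LinearMap.finrank_range_of_inj hinj, Module.finrank_fin_fun]
  · ext N
    rw [hG5', hG25', SetLike.mem_coe, mem_shephardTodd5_iff hprim]
    refine exists_congr fun M => and_congr_right fun _ => ?_
    simp only [mulVecLin_apply, forall_mulVec_mulVec_eq_iff, iff_and_self, ← hE']
    rintro hMN _ ⟨t, rfl⟩
    exact ⟨N *ᵥ t, (forall_mulVec_mulVec_eq_iff.mpr hMN t).symm⟩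

end
end Paper
end
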